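/- Let U be a squared four-dimensional Bessel process started at 0, τ₁^U := inf{ t ≥ 0 : Ū(t) − U(t) ≥ 1 } with Ū(t) := sup_{s ∈ [0,t]} U(s). Then there exists a standard one-dimensional Brownian motion B (adapted to the time-changed filtration G_r := F_{C(r)} where C is the inverse of A(t) := ∫₀^t U(s) ds) such that U(t) = 2 B(A(t)) + 4t for all t ≥ 0, and moreover E[ B( A(τ₁^U) ) ] = 0; consequently E[ τ₁^U ] = (1/4) E[ U(τ₁^U) ]. -/

import Mathlib

open MeasureTheory ProbabilityTheory Real Set Filter

noncomputable section

variable {Ω : Type*} [MeasurableSpace Ω]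

/-- A standard one-dimensional Brownian motion (indexed by `ℝ`, with the relevant
properties required for nonnegative times): starts at `0`, has continuous paths,
independent increments, and Gaussian increments of variance `t - s`. -/
structure IsStdBM (P : Measure Ω) (B : ℝ → Ω → ℝ) : Prop where
  measurable : ∀ t : ℝ, Measurable (B t)
  start : ∀ ω, B 0 ω = 0
  cont : ∀ ω, Continuous fun t => B t ω
  indep : ∀ (n : ℕ) (t : Fin (n + 1) → ℝ), (∀ i, 0 ≤ t i) → Monotone t →
    iIndepFun
      (fun (i : Fin n) ω => B (t i.succ) ω - B (t i.castSucc) ω) P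
  gauss : ∀ s t : ℝ, 0 ≤ s → s ≤ t →
    P.map (fun ω => B t ω - B s ω) = gaussianReal 0 (Real.toNNReal (t - s))

/-- A standard `d`-dimensional Brownian motion started at `0`: the coordinate
processes are independent standard one-dimensional Brownian motions. -/
structure IsStdBMVec (d : ℕ) (P : Measure Ω) (B : ℝ → Ω → EuclideanSpace ℝ (Fin d)) : Prop where
  coord : ∀ i : Fin d, IsStdBM P (fun t ω => B t ω i)
  indepCoord : iIndepFun
    (fun (i : Fin d) ω => fun t : ℝ => B t ω i) P

/-- Last zero of `W` in `[0,1]`. -/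
def lastZero (W : ℝ → Ω → ℝ) (ω : Ω) : ℝ := sSup {t ∈ Icc (0:ℝ) 1 | W t ω = 0}

/-- `m` is a standard Brownian meander: obtained from a Brownian motion `W` by
`m s = |W (g + s (1 - g))| / √(1 - g)`, where `g` is the last zero of `W` before time `1`. -/
def IsBrownianMeander (P : Measure Ω) (m : ℝ → Ω → ℝ) : Prop :=
  ∃ W : ℝ → Ω → ℝ, IsStdBM P W ∧
    ∀ ω, ∀ s ∈ Icc (0:ℝ) 1,
      m s ω = |W (lastZero W ω + s * (1 - lastZero W ω)) ω| / Real.sqrt (1 - lastZero W ω)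

/-- Running maximum `X̄(t) = sup_{s ∈ [0,t]} X(s)`. -/
def runMax (X : ℝ → Ω → ℝ) (t : ℝ) (ω : Ω) : ℝ := ⨆ s : Icc (0:ℝ) t, X s ω

/-- Maximal drawdown on `[0,T]` : `sup_{s ∈ [0,T]} (X̄(s) - X(s))`. -/
def maxDDOn (X : ℝ → Ω → ℝ) (T : ℝ) (ω : Ω) : ℝ := ⨆ s : Icc (0:ℝ) T, (runMax X s ω - X s ω)

/-- Drawdown time `τ_λ^X := inf {t ≥ 0 : X̄(t) - X(t) ≥ λ}`. -/
def ddTime (lam : ℝ) (X : ℝ → Ω → ℝ) (ω : Ω) : ℝ :=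
  sInf {t | 0 ≤ t ∧ lam ≤ runMax X t ω - X t ω}

/-- Three-dimensional Bessel process built from a 3-dimensional Brownian motion. -/
def bessel3 (β : ℝ → Ω → EuclideanSpace ℝ (Fin 3)) (t : ℝ) (ω : Ω) : ℝ := ‖β t ω‖

/-- Squared four-dimensional Bessel process built from a 4-dimensional Brownian motion. -/
def sqBessel4 (γ : ℝ → Ω → EuclideanSpace ℝ (Fin 4)) (t : ℝ) (ω : Ω) : ℝ := ‖γ t ω‖ ^ 2

end

open scoped ENNReal

/-!
Write `U = ‖γ‖²` and `A t = ∫₀ᵗ U`. The process `M = (U - d t) / 2` is a martingale, with bracket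
`A`. Its time change `B` by the inverse of `A` is identified as a Brownian motion through
characteristic functions, without stochastic integrals: for a step function `l`, the Riemann sums
of `∫ l(A) dM` are linear in Gaussian increments given the past, so multiplying
`exp (i ∫ l(A) dM)` by the exponential of half its discrete bracket gives an expectation of `1` up
to errors that vanish with the mesh, and the bracket tends to the deterministic `∫ l²`.

For Wald's identity, the drawdown time is replaced by the first point of a grid at which a drawdown
has occurred. There the identity is a telescoping sum, because the event that no drawdown has
occurred yet depends only on the past. Whatever the past, a push of every coordinate away from the
origin followed by a pull back produces a drawdown with probability bounded below, so the drawdown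
time has an exponential tail. The second moments of the grid approximations are therefore bounded,
which gives the uniform integrability needed to refine the grid.
-/

open scoped Topology RealInnerProductSpace NNReal

/-! ### The past of a path and its increments -/

/-- The σ-algebra generated by the path of `X` on `[0, t]`. -/
@[reducible] def past {Ω E : Type*} [MeasurableSpace E] (X : ℝ → Ω → E) (t : ℝ) :
    MeasurableSpace Ω :=
  MeasurableSpace.comap (fun ω (s : Icc (0 : ℝ) t) => X s ω) inferInstance

section Past

variable {Ω E : Type*} [MeasurableSpace E] {X : ℝ → Ω → E}

theorem measurable_past {s t : ℝ} (hs : 0 ≤ s) (hst : s ≤ t) : Measurable[past X t] (X s) :=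
  (measurable_pi_apply (⟨s, hs, hst⟩ : Icc (0 : ℝ) t)).comp
    (comap_measurable fun ω (u : Icc (0 : ℝ) t) => X u ω)

theorem past_mono {s t : ℝ} (hst : s ≤ t) : past X s ≤ past X t := by
  refine Measurable.comap_le ?_
  exact @measurable_pi_lambda _ _ _ (past X t) _ _ fun u =>
    measurable_past u.2.1 (u.2.2.trans hst)

theorem past_le [mΩ : MeasurableSpace Ω] (hX : ∀ t, Measurable (X t)) (t : ℝ) : past X t ≤ mΩ :=
  Measurable.comap_le (measurable_pi_lambda _ fun s => hX s)

end Past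

theorem IsStdBM.indepFun_past_increment {Ω : Type*} [MeasurableSpace Ω] {P : Measure Ω}
    {B : ℝ → Ω → ℝ} (hB : IsStdBM P B) {s t : ℝ} (hs : 0 ≤ s) (hst : s ≤ t) :
    IndepFun (fun ω (u : Icc (0 : ℝ) s) => B u ω) (fun ω => B t ω - B s ω) P := by
  have pre_brownian : IsPreBrownianReal (fun (t : ℝ≥0) ω => B t ω) P := by
    refine HasIndepIncrements.isPreBrownianReal_of_hasLaw
      (fun t => ⟨(hB.measurable _).aemeasurable, ?_⟩) fun n t ht => ?_
    · simpa [hB.start] using hB.gauss 0 t le_rfl t.2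
    · exact hB.indep n (fun i => (t i : ℝ)) (fun i => (t i).2)
        (fun i j hij => by exact_mod_cast ht hij)
  have shift := (pre_brownian.indepFun_shift ⟨s, hs⟩).symm
  have restrict : Measurable fun (x : Set.Iic (⟨s, hs⟩ : ℝ≥0) → ℝ) (u : Icc (0 : ℝ) s) =>
      x ⟨⟨u, u.2.1⟩, u.2.2⟩ := by fun_prop
  have eval : Measurable fun x : ℝ≥0 → ℝ => x ⟨t - s, sub_nonneg.2 hst⟩ := by fun_prop
  convert shift.comp restrict eval using 1
  · rfl
  ext ω
  change B t ω - B s ω = B (s + (t - s)) ω - B s ω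
  rw [add_sub_cancel]

theorem indepFun_pi_of_iIndepFun_prodMk {Ω ι 𝓧 𝓨 : Type*} [Finite ι] [MeasurableSpace Ω]
    [MeasurableSpace 𝓧] [MeasurableSpace 𝓨] {P : Measure Ω} [IsProbabilityMeasure P]
    {X : ι → Ω → 𝓧} {Y : ι → Ω → 𝓨} (hX : ∀ i, Measurable (X i)) (hY : ∀ i, Measurable (Y i))
    (hXY : ∀ i, IndepFun (X i) (Y i) P) (h : iIndepFun (fun i ω => (X i ω, Y i ω)) P) :
    IndepFun (fun ω i => X i ω) (fun ω i => Y i ω) P := by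
  have := Fintype.ofFinite ι
  have := fun i => Measure.isProbabilityMeasure_map (μ := P) (hX i).aemeasurable
  have := fun i => Measure.isProbabilityMeasure_map (μ := P) (hY i).aemeasurable
  have law_X := (iIndepFun_iff_map_fun_eq_pi_map fun i => (hX i).aemeasurable).1
    (h.comp (fun _ => Prod.fst) fun _ => measurable_fst)
  have law_Y := (iIndepFun_iff_map_fun_eq_pi_map fun i => (hY i).aemeasurable).1
    (h.comp (fun _ => Prod.snd) fun _ => measurable_snd)
  have law_XY := (iIndepFun_iff_map_fun_eq_pi_map
    fun i => ((hX i).prodMk (hY i)).aemeasurable).1 h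
  simp_rw [fun i => (indepFun_iff_map_prod_eq_prod_map_map (hX i).aemeasurable
    (hY i).aemeasurable).1 (hXY i)] at law_XY
  rw [indepFun_iff_map_prod_eq_prod_map_map (measurable_pi_lambda _ hX).aemeasurable
    (measurable_pi_lambda _ hY).aemeasurable, law_X, law_Y,
    ← (measurePreserving_arrowProdEquivProdArrow 𝓧 𝓨 ι (fun i => P.map (X i))
      (fun i => P.map (Y i))).map_eq, ← law_XY, Measure.map_map (MeasurableEquiv.measurable _)
      (measurable_pi_lambda _ fun i => (hX i).prodMk (hY i))]
  rfl

namespace IsStdBMVec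

variable {Ω : Type*} [MeasurableSpace Ω] {P : Measure Ω} {d : ℕ}
  {γ : ℝ → Ω → EuclideanSpace ℝ (Fin d)}

theorem measurable (hγ : IsStdBMVec d P γ) (t : ℝ) : Measurable (γ t) :=
  (MeasurableEquiv.toLp 2 (Fin d → ℝ)).measurable.comp
    (measurable_pi_lambda _ fun i => (hγ.coord i).measurable t)

theorem start (hγ : IsStdBMVec d P γ) (ω : Ω) : γ 0 ω = 0 :=
  PiLp.ext fun i => (hγ.coord i).start ω

theorem cont (hγ : IsStdBMVec d P γ) (ω : Ω) : Continuous fun t => γ t ω :=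
  (PiLp.continuous_toLp 2 _).comp (continuous_pi fun i => (hγ.coord i).cont ω)

theorem measurable_increment (hγ : IsStdBMVec d P γ) (s t : ℝ) :
    Measurable fun ω => γ t ω - γ s ω :=
  (hγ.measurable t).sub (hγ.measurable s)

theorem measurable_increment_coord (hγ : IsStdBMVec d P γ) (s t : ℝ) (i : Fin d) :
    Measurable fun ω => (γ t ω - γ s ω) i :=
  ((hγ.coord i).measurable t).sub ((hγ.coord i).measurable s)

theorem indepFun_increment [IsProbabilityMeasure P] (hγ : IsStdBMVec d P γ) {s t : ℝ}
    (hs : 0 ≤ s) (hst : s ≤ t) {𝓧 : Type*} [MeasurableSpace 𝓧] {X : Ω → 𝓧}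
    (hX : Measurable[past γ s] X) : IndepFun X (fun ω => γ t ω - γ s ω) P := by
  have coord_pairs : iIndepFun (fun (i : Fin d) ω =>
      ((fun u : Icc (0 : ℝ) s => γ u ω i), γ t ω i - γ s ω i)) P :=
    hγ.indepCoord.comp (fun _ x => ((fun u : Icc (0 : ℝ) s => x u), x t - x s))
      fun _ => by fun_prop
  have coords := indepFun_pi_of_iIndepFun_prodMk
    (fun i => measurable_pi_lambda _ fun u : Icc (0 : ℝ) s => (hγ.coord i).measurable u)
    (fun i => ((hγ.coord i).measurable t).sub ((hγ.coord i).measurable s))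
    (fun i => (hγ.coord i).indepFun_past_increment hs hst) coord_pairs
  have vectors : IndepFun (fun ω (u : Icc (0 : ℝ) s) => γ u ω) (fun ω => γ t ω - γ s ω) P :=
    coords.comp (φ := fun x u => WithLp.toLp 2 fun i => x i u) (ψ := WithLp.toLp 2)
      (measurable_pi_lambda _ fun u => (MeasurableEquiv.toLp 2 (Fin d → ℝ)).measurable.comp
        (by fun_prop)) (MeasurableEquiv.toLp 2 (Fin d → ℝ)).measurable
  rw [IndepFun_iff_Indep] at vectors ⊢
  exact indep_of_indep_of_le_left vectors hX.comap_le

theorem iIndepFun_increment_coord (hγ : IsStdBMVec d P γ) (s t : ℝ) :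
    iIndepFun (fun (i : Fin d) ω => (γ t ω - γ s ω) i) P :=
  hγ.indepCoord.comp (fun _ x => x t - x s) fun _ => by fun_prop

theorem map_increment_coord (hγ : IsStdBMVec d P γ) {s t : ℝ} (hs : 0 ≤ s) (hst : s ≤ t)
    (i : Fin d) : P.map (fun ω => (γ t ω - γ s ω) i) = gaussianReal 0 (t - s).toNNReal :=
  (hγ.coord i).gauss s t hs hst

theorem charFun_increment [IsProbabilityMeasure P] (hγ : IsStdBMVec d P γ) {s t : ℝ}
    (hs : 0 ≤ s) (hst : s ≤ t) (w : EuclideanSpace ℝ (Fin d)) :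
    charFun (P.map fun ω => γ t ω - γ s ω) w = Complex.exp (-((t - s) * ‖w‖ ^ 2 / 2 : ℝ)) := by
  have prod_form : charFun (P.map fun ω => γ t ω - γ s ω) w =
      ∏ i, charFun (P.map fun ω => (γ t ω - γ s ω) i) (w i) :=
    (iIndepFun_iff_charFun_pi fun i => (hγ.measurable_increment_coord s t i).aemeasurable).1
      (hγ.iIndepFun_increment_coord s t) w
  rw [prod_form]
  simp_rw [hγ.map_increment_coord hs hst, charFun_gaussianReal, ← Complex.exp_sum]
  rw [EuclideanSpace.real_norm_sq_eq, Real.coe_toNNReal _ (sub_nonneg.2 hst)]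
  congr 1
  push_cast
  simp only [mul_zero, zero_mul, zero_sub, Finset.sum_neg_distrib, Finset.mul_sum,
    Finset.sum_div]

end IsStdBMVec

/-! ### Moments -/

/-- `f` has moments of every order under `P`: a class of random variables closed under sums and
products, so that integrability of polynomial expressions is automatic. -/
def HasAllMoments {Ω : Type*} [MeasurableSpace Ω] (P : Measure Ω) (f : Ω → ℝ) : Prop :=
  ∀ p : ℕ, MemLp f p P

namespace HasAllMoments

variable {Ω : Type*} [MeasurableSpace Ω] {P : Measure Ω} {f g : Ω → ℝ}

theorem add (hf : HasAllMoments P f) (hg : HasAllMoments P g) :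
    HasAllMoments P fun ω => f ω + g ω :=
  fun p => (hf p).add (hg p)

theorem sub (hf : HasAllMoments P f) (hg : HasAllMoments P g) :
    HasAllMoments P fun ω => f ω - g ω :=
  fun p => (hf p).sub (hg p)

theorem const_mul (c : ℝ) (hf : HasAllMoments P f) : HasAllMoments P fun ω => c * f ω :=
  fun p => (hf p).const_mul c

theorem mul (hf : HasAllMoments P f) (hg : HasAllMoments P g) :
    HasAllMoments P fun ω => f ω * g ω := by
  intro p
  have : ENNReal.HolderTriple ((2 * p : ℕ) : ℝ≥0∞) ((2 * p : ℕ) : ℝ≥0∞) (p : ℝ≥0∞) := by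
    constructor
    push_cast
    rw [ENNReal.mul_inv (by simp) (by simp), ← add_mul, ENNReal.inv_two_add_inv_two, one_mul]
  exact (hg (2 * p)).mul (hf (2 * p))

theorem sq (hf : HasAllMoments P f) : HasAllMoments P fun ω => f ω ^ 2 := by
  simpa only [pow_two] using hf.mul hf

theorem sum {ι : Type*} (s : Finset ι) {f : ι → Ω → ℝ} (hf : ∀ i ∈ s, HasAllMoments P (f i)) :
    HasAllMoments P fun ω => ∑ i ∈ s, f i ω :=
  fun p => memLp_finsetSum s fun i hi => hf i hi p

theorem integrable (hf : HasAllMoments P f) : Integrable f P :=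
  memLp_one_iff_integrable.1 (by simpa only [Nat.cast_one] using hf 1)

theorem of_bound [IsFiniteMeasure P] (hf : Measurable f) {C : ℝ} (hC : ∀ ω, |f ω| ≤ C) :
    HasAllMoments P f :=
  fun _ => MemLp.of_bound hf.aestronglyMeasurable C (ae_of_all _ hC)

theorem const [IsFiniteMeasure P] (c : ℝ) : HasAllMoments P fun _ => c :=
  fun _ => memLp_const c

end HasAllMoments

/-- The fourth moment of the standard normal law. -/
noncomputable def gaussianFourthMoment : ℝ := ∫ x : ℝ, x ^ 4 ∂(gaussianReal 0 1)

theorem gaussianFourthMoment_nonneg : 0 ≤ gaussianFourthMoment :=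
  integral_nonneg fun x => by positivity

theorem integral_pow_four_gaussianReal (v : ℝ≥0) :
    ∫ x, x ^ 4 ∂(gaussianReal 0 v) = v ^ 2 * gaussianFourthMoment := by
  have scaling := gaussianReal_map_const_mul (μ := 0) (v := 1) √v
  have variance : NNReal.mk (√(v : ℝ) ^ 2) (sq_nonneg _) * 1 = v := by
    rw [mul_one]
    exact NNReal.eq (Real.sq_sqrt v.2)
  rw [variance, mul_zero] at scaling
  have sqrt_pow : √(v : ℝ) ^ 4 = (v : ℝ) ^ 2 := by
    rw [show 4 = 2 * 2 from rfl, pow_mul, Real.sq_sqrt v.coe_nonneg]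
  rw [← scaling, integral_map (by fun_prop) (by fun_prop), gaussianFourthMoment]
  simp only [mul_pow, sqrt_pow, integral_const_mul]

/-- The squared Bessel process `‖γ t‖²` of a path `γ` in a normed space. -/
def sqBessel {Ω E : Type*} [Norm E] (γ : ℝ → Ω → E) (t : ℝ) (ω : Ω) : ℝ := ‖γ t ω‖ ^ 2

section SqBessel

variable {Ω E : Type*} {γ : ℝ → Ω → E}

theorem sqBessel_nonneg [Norm E] (t : ℝ) (ω : Ω) : 0 ≤ sqBessel γ t ω := sq_nonneg _

theorem measurable_sqBessel_past [NormedAddCommGroup E] [MeasurableSpace E]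
    [OpensMeasurableSpace E] {s t : ℝ} (hs : 0 ≤ s) (hst : s ≤ t) :
    Measurable[past γ t] (sqBessel γ s) :=
  (measurable_norm.pow_const 2).comp (measurable_past hs hst)

theorem sqBessel_sub_sqBessel [NormedAddCommGroup E] [InnerProductSpace ℝ E] (s t : ℝ) (ω : Ω) :
    sqBessel γ t ω - sqBessel γ s ω =
      2 * ⟪γ s ω, γ t ω - γ s ω⟫ + ‖γ t ω - γ s ω‖ ^ 2 := by
  rw [sqBessel, sqBessel, sub_eq_iff_eq_add, add_comm, ← add_assoc, ← norm_add_sq_real,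
    add_sub_cancel]

theorem sqBessel_sq_sub_le [NormedAddCommGroup E] [InnerProductSpace ℝ E] (s t : ℝ) (ω : Ω) :
    sqBessel γ t ω ^ 2 - sqBessel γ s ω ^ 2 ≤
      2 * (sqBessel γ s ω * (sqBessel γ t ω - sqBessel γ s ω)) +
        (8 * (sqBessel γ s ω * ‖γ t ω - γ s ω‖ ^ 2) + 2 * (‖γ t ω - γ s ω‖ ^ 2) ^ 2) := by
  have expand := sqBessel_sub_sqBessel (γ := γ) s t ω
  have cauchy_schwarz : ⟪γ s ω, γ t ω - γ s ω⟫ ^ 2 ≤ sqBessel γ s ω * ‖γ t ω - γ s ω‖ ^ 2 := by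
    rw [sqBessel, ← mul_pow]
    exact sq_le_sq' (neg_le_of_abs_le (abs_real_inner_le_norm _ _)) (real_inner_le_norm _ _)
  rw [show sqBessel γ t ω ^ 2 - sqBessel γ s ω ^ 2 =
    2 * (sqBessel γ s ω * (sqBessel γ t ω - sqBessel γ s ω)) +
      (sqBessel γ t ω - sqBessel γ s ω) ^ 2 by ring, expand]
  nlinarith [sq_nonneg (2 * ⟪γ s ω, γ t ω - γ s ω⟫ - ‖γ t ω - γ s ω‖ ^ 2)]

end SqBessel

namespace IsStdBMVec

variable {Ω : Type*} [MeasurableSpace Ω] {P : Measure Ω} {d : ℕ}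
  {γ : ℝ → Ω → EuclideanSpace ℝ (Fin d)} {s t : ℝ}

theorem continuous_sqBessel (hγ : IsStdBMVec d P γ) (ω : Ω) :
    Continuous fun t => sqBessel γ t ω :=
  (hγ.cont ω).norm.pow 2

theorem measurable_sqBessel (hγ : IsStdBMVec d P γ) (t : ℝ) : Measurable (sqBessel γ t) :=
  (hγ.measurable t).norm.pow_const 2

theorem measurable_of_past (hγ : IsStdBMVec d P γ) {𝓧 : Type*} [MeasurableSpace 𝓧] {X : Ω → 𝓧}
    (hX : Measurable[past γ s] X) : Measurable X :=
  hX.mono (past_le hγ.measurable s) le_rfl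

theorem hasAllMoments_increment_coord (hγ : IsStdBMVec d P γ) (hs : 0 ≤ s) (hst : s ≤ t)
    (i : Fin d) : HasAllMoments P fun ω => (γ t ω - γ s ω) i := by
  intro p
  have gauss := memLp_id_gaussianReal (μ := 0) (v := (t - s).toNNReal) p
  rw [← hγ.map_increment_coord hs hst i] at gauss
  exact (memLp_map_measure_iff aestronglyMeasurable_id
    (hγ.measurable_increment_coord s t i).aemeasurable).1 gauss

theorem hasAllMoments_norm_sq_increment (hγ : IsStdBMVec d P γ) (hs : 0 ≤ s) (hst : s ≤ t) :
    HasAllMoments P fun ω => ‖γ t ω - γ s ω‖ ^ 2 := by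
  simp_rw [EuclideanSpace.real_norm_sq_eq]
  exact HasAllMoments.sum _ fun i _ => (hγ.hasAllMoments_increment_coord hs hst i).sq

theorem hasAllMoments_coord (hγ : IsStdBMVec d P γ) (ht : 0 ≤ t) (i : Fin d) :
    HasAllMoments P fun ω => γ t ω i := by
  simpa only [hγ.start, sub_zero] using hγ.hasAllMoments_increment_coord le_rfl ht i

theorem hasAllMoments_sqBessel (hγ : IsStdBMVec d P γ) (ht : 0 ≤ t) :
    HasAllMoments P (sqBessel γ t) := by
  have := hγ.hasAllMoments_norm_sq_increment le_rfl ht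
  simp_rw [hγ.start, sub_zero] at this
  exact this

theorem hasAllMoments_inner_increment (hγ : IsStdBMVec d P γ) (hs : 0 ≤ s) (hst : s ≤ t) :
    HasAllMoments P fun ω => ⟪γ s ω, γ t ω - γ s ω⟫ := by
  simp_rw [PiLp.inner_apply]
  exact HasAllMoments.sum _ fun i _ =>
    (hγ.hasAllMoments_increment_coord hs hst i).mul (hγ.hasAllMoments_coord hs i)

theorem integral_comp_increment_coord (hγ : IsStdBMVec d P γ) (hs : 0 ≤ s) (hst : s ≤ t)
    (i : Fin d) {f : ℝ → ℝ} (hf : Measurable f) :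
    ∫ ω, f ((γ t ω - γ s ω) i) ∂P = ∫ x, f x ∂(gaussianReal 0 (t - s).toNNReal) := by
  rw [← hγ.map_increment_coord hs hst i, integral_map
    (hγ.measurable_increment_coord s t i).aemeasurable hf.aestronglyMeasurable]

theorem integral_increment_coord_sq (hγ : IsStdBMVec d P γ) (hs : 0 ≤ s) (hst : s ≤ t)
    (i : Fin d) : ∫ ω, (γ t ω - γ s ω) i ^ 2 ∂P = t - s := by
  have variance := variance_id_gaussianReal (μ := 0) (v := (t - s).toNNReal)
  rw [variance_eq_integral aemeasurable_id] at variance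
  simp only [id, integral_id_gaussianReal, sub_zero] at variance
  rw [hγ.integral_comp_increment_coord hs hst i (f := fun x => x ^ 2) (by fun_prop), variance,
    Real.coe_toNNReal _ (sub_nonneg.2 hst)]

theorem integral_norm_sq_increment (hγ : IsStdBMVec d P γ) (hs : 0 ≤ s) (hst : s ≤ t) :
    ∫ ω, ‖γ t ω - γ s ω‖ ^ 2 ∂P = d * (t - s) := by
  simp_rw [EuclideanSpace.real_norm_sq_eq]
  rw [integral_finsetSum _ fun i _ => (hγ.hasAllMoments_increment_coord hs hst i).sq.integrable]
  simp only [hγ.integral_increment_coord_sq hs hst, Finset.sum_const, Finset.card_univ,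
    Fintype.card_fin, nsmul_eq_mul]

theorem integral_norm_sq_increment_sq_le (hγ : IsStdBMVec d P γ) (hs : 0 ≤ s) (hst : s ≤ t) :
    ∫ ω, (‖γ t ω - γ s ω‖ ^ 2) ^ 2 ∂P ≤ d ^ 2 * gaussianFourthMoment * (t - s) ^ 2 := by
  have moments (i : Fin d) : HasAllMoments P fun ω => (γ t ω - γ s ω) i ^ 4 := by
    simpa only [← pow_mul] using (hγ.hasAllMoments_increment_coord hs hst i).sq.sq
  have fourth (i : Fin d) :
      ∫ ω, (γ t ω - γ s ω) i ^ 4 ∂P = (t - s) ^ 2 * gaussianFourthMoment := by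
    rw [hγ.integral_comp_increment_coord hs hst i (f := fun x => x ^ 4) (by fun_prop),
      integral_pow_four_gaussianReal, Real.coe_toNNReal _ (sub_nonneg.2 hst)]
  calc ∫ ω, (‖γ t ω - γ s ω‖ ^ 2) ^ 2 ∂P
      ≤ ∫ ω, d * ∑ i, (γ t ω - γ s ω) i ^ 4 ∂P := by
        refine integral_mono (hγ.hasAllMoments_norm_sq_increment hs hst).sq.integrable
          ((HasAllMoments.sum _ fun i _ => moments i).const_mul _).integrable fun ω => ?_
        have cauchy_schwarz := sq_sum_le_card_mul_sum_sq (s := Finset.univ)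
          (f := fun i => (γ t ω - γ s ω) i ^ 2)
        simpa [EuclideanSpace.real_norm_sq_eq, ← pow_mul] using cauchy_schwarz
    _ = d ^ 2 * gaussianFourthMoment * (t - s) ^ 2 := by
        rw [integral_const_mul, integral_finsetSum _ fun i _ => (moments i).integrable]
        simp only [fourth, Finset.sum_const, Finset.card_univ, Fintype.card_fin, nsmul_eq_mul]
        ring

theorem integral_sqBessel_sq_le (hγ : IsStdBMVec d P γ) (ht : 0 ≤ t) :
    ∫ ω, sqBessel γ t ω ^ 2 ∂P ≤ d ^ 2 * gaussianFourthMoment * t ^ 2 := by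
  simpa only [hγ.start, sub_zero, sqBessel] using hγ.integral_norm_sq_increment_sq_le le_rfl ht

variable [IsProbabilityMeasure P] {X : Ω → ℝ}

theorem integral_mul_comp_increment (hγ : IsStdBMVec d P γ) (hs : 0 ≤ s) (hst : s ≤ t)
    (hX : Measurable[past γ s] X) {g : EuclideanSpace ℝ (Fin d) → ℝ} (hg : Measurable g) :
    ∫ ω, X ω * g (γ t ω - γ s ω) ∂P = (∫ ω, X ω ∂P) * ∫ ω, g (γ t ω - γ s ω) ∂P :=
  ((hγ.indepFun_increment hs hst hX).comp measurable_id hg).integral_fun_mul_eq_mul_integral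
    (hγ.measurable_of_past hX).aestronglyMeasurable
    (hg.comp (hγ.measurable_increment s t)).aestronglyMeasurable

theorem integral_mul_norm_sq_increment (hγ : IsStdBMVec d P γ) (hs : 0 ≤ s) (hst : s ≤ t)
    (hX : Measurable[past γ s] X) :
    ∫ ω, X ω * ‖γ t ω - γ s ω‖ ^ 2 ∂P = d * (t - s) * ∫ ω, X ω ∂P := by
  rw [hγ.integral_mul_comp_increment hs hst hX (g := fun x => ‖x‖ ^ 2) (by fun_prop),
    hγ.integral_norm_sq_increment hs hst, mul_comm]

theorem integral_mul_inner_increment (hγ : IsStdBMVec d P γ) (hs : 0 ≤ s) (hst : s ≤ t)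
    (hX : Measurable[past γ s] X) (hmom : HasAllMoments P X) :
    ∫ ω, X ω * ⟪γ s ω, γ t ω - γ s ω⟫ ∂P = 0 := by
  have coord_zero (i : Fin d) : ∫ ω, X ω * γ s ω i * (γ t ω - γ s ω) i ∂P = 0 := by
    have hXi : Measurable[past γ s] fun ω => X ω * γ s ω i :=
      hX.mul ((EuclideanSpace.proj (𝕜 := ℝ) i).measurable.comp (measurable_past hs le_rfl))
    have mean_zero := hγ.integral_comp_increment_coord hs hst i measurable_id
    simp only [id, integral_id_gaussianReal] at mean_zero
    rw [hγ.integral_mul_comp_increment hs hst hXi (g := fun x => x i) (by fun_prop), mean_zero,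
      mul_zero]
  have inner_eq (ω : Ω) : X ω * ⟪γ s ω, γ t ω - γ s ω⟫ =
      ∑ i, X ω * γ s ω i * (γ t ω - γ s ω) i := by
    rw [PiLp.inner_apply, Finset.mul_sum]
    exact Finset.sum_congr rfl fun i _ => by simp only [RCLike.inner_apply, conj_trivial]; ring
  simp_rw [inner_eq]
  rw [integral_finsetSum _ fun i _ => ((hmom.mul (hγ.hasAllMoments_coord hs i)).mul
    (hγ.hasAllMoments_increment_coord hs hst i)).integrable]
  exact Finset.sum_eq_zero fun i _ => coord_zero i

theorem integral_mul_sqBessel_sub (hγ : IsStdBMVec d P γ) (hs : 0 ≤ s) (hst : s ≤ t)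
    (hX : Measurable[past γ s] X) (hmom : HasAllMoments P X) :
    ∫ ω, X ω * (sqBessel γ t ω - sqBessel γ s ω) ∂P = d * (t - s) * ∫ ω, X ω ∂P := by
  simp_rw [sqBessel_sub_sqBessel, mul_add, mul_left_comm _ (2 : ℝ)]
  rw [integral_add
    ((hmom.mul (hγ.hasAllMoments_inner_increment hs hst)).const_mul 2).integrable
    (hmom.mul (hγ.hasAllMoments_norm_sq_increment hs hst)).integrable, integral_const_mul,
    hγ.integral_mul_inner_increment hs hst hX hmom,
    hγ.integral_mul_norm_sq_increment hs hst hX, mul_zero, zero_add]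

theorem integral_mul_sqBessel_sq_sub_le (hγ : IsStdBMVec d P γ) (hs : 0 ≤ s) (hst : s ≤ t)
    (hX : Measurable[past γ s] X) (hmom : HasAllMoments P X) (hX0 : ∀ ω, 0 ≤ X ω) :
    ∫ ω, X ω * (sqBessel γ t ω ^ 2 - sqBessel γ s ω ^ 2) ∂P ≤
      10 * d * (t - s) * (∫ ω, X ω * sqBessel γ s ω ∂P) +
        2 * (d ^ 2 * gaussianFourthMoment) * (t - s) ^ 2 * ∫ ω, X ω ∂P := by
  have hXU : Measurable[past γ s] fun ω => X ω * sqBessel γ s ω :=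
    hX.mul (measurable_sqBessel_past hs le_rfl)
  have mom_U := hγ.hasAllMoments_sqBessel hs
  have mom_V := hγ.hasAllMoments_sqBessel (hs.trans hst)
  have mom_Δ := hγ.hasAllMoments_norm_sq_increment hs hst
  have int₁ := ((hmom.mul mom_U).mul (mom_V.sub mom_U)).const_mul 2
  have int₂ := ((hmom.mul mom_U).mul mom_Δ).const_mul 8
  have int₃ := (hmom.mul mom_Δ.sq).const_mul 2
  have pointwise (ω : Ω) : X ω * (sqBessel γ t ω ^ 2 - sqBessel γ s ω ^ 2) ≤
      2 * (X ω * sqBessel γ s ω * (sqBessel γ t ω - sqBessel γ s ω)) +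
        (8 * (X ω * sqBessel γ s ω * ‖γ t ω - γ s ω‖ ^ 2) +
          2 * (X ω * (‖γ t ω - γ s ω‖ ^ 2) ^ 2)) := by
    refine (mul_le_mul_of_nonneg_left (sqBessel_sq_sub_le s t ω) (hX0 ω)).trans_eq ?_
    ring
  refine (integral_mono (hmom.mul (mom_V.sq.sub mom_U.sq)).integrable
    (int₁.add (int₂.add int₃)).integrable pointwise).trans ?_
  rw [integral_add int₁.integrable (int₂.add int₃).integrable,
    integral_add int₂.integrable int₃.integrable, integral_const_mul, integral_const_mul,
    integral_const_mul, hγ.integral_mul_sqBessel_sub hs hst hXU (hmom.mul mom_U),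
    hγ.integral_mul_norm_sq_increment hs hst hXU,
    hγ.integral_mul_comp_increment hs hst hX (g := fun x => (‖x‖ ^ 2) ^ 2) (by fun_prop)]
  nlinarith [mul_le_mul_of_nonneg_left (hγ.integral_norm_sq_increment_sq_le hs hst)
    (integral_nonneg (μ := P) hX0)]

end IsStdBMVec

/-! ### Discrete stochastic integrals and their exponential martingale -/

theorem integral_mul_cexp_inner_of_indepFun {Ω E : Type*} [MeasurableSpace Ω]
    [NormedAddCommGroup E] [InnerProductSpace ℝ E] [MeasurableSpace E] [BorelSpace E]
    [SecondCountableTopology E] {P : Measure Ω} [IsProbabilityMeasure P] {Z : Ω → ℂ} {W Y : Ω → E}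
    (hZ : Measurable Z) (hW : Measurable W) (hY : Measurable Y) (hint : Integrable Z P)
    (hind : IndepFun (fun ω => (Z ω, W ω)) Y P) :
    ∫ ω, Z ω * Complex.exp (⟪Y ω, W ω⟫ * Complex.I) ∂P =
      ∫ ω, Z ω * charFun (P.map Y) (W ω) ∂P := by
  have := Measure.isProbabilityMeasure_map (μ := P) hY.aemeasurable
  have := Measure.isProbabilityMeasure_map (μ := P) (hZ.prodMk hW).aemeasurable
  let F : (ℂ × E) × E → ℂ := fun p => p.1.1 * Complex.exp (⟪p.2, p.1.2⟫ * Complex.I)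
  have hF : Measurable F := by fun_prop
  have law := (indepFun_iff_map_prod_eq_prod_map_map (hZ.prodMk hW).aemeasurable
    hY.aemeasurable).1 hind
  have hF_int : Integrable F ((P.map fun ω => (Z ω, W ω)).prod (P.map Y)) := by
    rw [← law, integrable_map_measure hF.aestronglyMeasurable
      ((hZ.prodMk hW).prodMk hY).aemeasurable]
    refine hint.mono (hF.comp ((hZ.prodMk hW).prodMk hY)).aestronglyMeasurable
      (ae_of_all _ fun ω => ?_)
    simp only [F, Function.comp_apply, norm_mul, Complex.norm_exp_ofReal_mul_I, mul_one, le_refl]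
  calc ∫ ω, Z ω * Complex.exp (⟪Y ω, W ω⟫ * Complex.I) ∂P
      = ∫ p, F p ∂((P.map fun ω => (Z ω, W ω)).prod (P.map Y)) := by
        rw [← law, integral_map ((hZ.prodMk hW).prodMk hY).aemeasurable hF.aestronglyMeasurable]
    _ = ∫ q, q.1 * charFun (P.map Y) q.2 ∂(P.map fun ω => (Z ω, W ω)) := by
        rw [integral_prod _ hF_int]
        simp only [F, integral_const_mul, charFun_apply]
    _ = ∫ ω, Z ω * charFun (P.map Y) (W ω) ∂P :=
        integral_map (hZ.prodMk hW).aemeasurable (by fun_prop)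

section ExpPhase

/-- The exponential `exp (v / 2 + i x)`: at the value and bracket of a martingale it is the
complex exponential martingale. -/
noncomputable def expPhase (v x : ℝ) : ℂ := (Real.exp (v / 2) : ℂ) * Complex.exp (x * Complex.I)

theorem continuous_expPhase : Continuous fun p : ℝ × ℝ => expPhase p.1 p.2 := by
  unfold expPhase
  fun_prop

theorem measurable_expPhase {Ω : Type*} {m : MeasurableSpace Ω} {V X : Ω → ℝ} (hV : Measurable V)
    (hX : Measurable X) : Measurable fun ω => expPhase (V ω) (X ω) := by
  simpa only [Function.comp_def] using continuous_expPhase.measurable.comp (hV.prodMk hX)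

theorem tendsto_expPhase {ι : Type*} {f : Filter ι} {V X : ι → ℝ} {v x : ℝ}
    (hV : Tendsto V f (𝓝 v)) (hX : Tendsto X f (𝓝 x)) :
    Tendsto (fun k => expPhase (V k) (X k)) f (𝓝 (expPhase v x)) := by
  simpa only [Function.comp_def, Function.uncurry_apply_pair] using
    (continuous_expPhase.tendsto (v, x)).comp (hV.prodMk_nhds hX)

theorem norm_expPhase (v x : ℝ) : ‖expPhase v x‖ = Real.exp (v / 2) := by
  rw [expPhase, norm_mul, Complex.norm_exp_ofReal_mul_I, mul_one, Complex.norm_real,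
    Real.norm_of_nonneg (Real.exp_pos _).le]

theorem expPhase_add_right (v x y : ℝ) :
    expPhase v (x + y) = expPhase v x * Complex.exp (y * Complex.I) := by
  rw [expPhase, expPhase, mul_assoc, ← Complex.exp_add, Complex.ofReal_add, add_mul]

theorem expPhase_add_left (v w x : ℝ) :
    expPhase (v + w) x = expPhase v x * (Real.exp (w / 2) : ℂ) := by
  rw [expPhase, expPhase, mul_right_comm, ← Complex.ofReal_mul, ← Real.exp_add, add_div]

variable {Ω : Type*} [MeasurableSpace Ω] {P : Measure Ω} [IsFiniteMeasure P] {V X : Ω → ℝ}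
  {C : ℝ}

theorem integrable_expPhase (hV : Measurable V) (hX : Measurable X) (hC : ∀ ω, V ω ≤ C) :
    Integrable (fun ω => expPhase (V ω) (X ω)) P := by
  refine .of_bound (measurable_expPhase hV hX).aestronglyMeasurable (Real.exp (C / 2))
    (ae_of_all _ fun ω => ?_)
  rw [norm_expPhase]
  exact Real.exp_le_exp.2 (div_le_div_of_nonneg_right (hC ω) two_pos.le)

end ExpPhase

/-- The discrete stochastic integral `∑ θⱼ ⟪γ(sⱼ), γ(sⱼ₊₁) - γ(sⱼ)⟫` along the grid `s`. -/
def innerSum {Ω E : Type*} [NormedAddCommGroup E] [InnerProductSpace ℝ E] (γ : ℝ → Ω → E)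
    (s : ℕ → ℝ) (θ : ℕ → Ω → ℝ) (J : ℕ) (ω : Ω) : ℝ :=
  ∑ j ∈ Finset.range J, θ j ω * ⟪γ (s j) ω, γ (s (j + 1)) ω - γ (s j) ω⟫

/-- The predictable quadratic variation of `innerSum` when `γ` is a Brownian motion. -/
def bracketSum {Ω E : Type*} [Norm E] (γ : ℝ → Ω → E) (s : ℕ → ℝ) (θ : ℕ → Ω → ℝ) (J : ℕ)
    (ω : Ω) : ℝ :=
  ∑ j ∈ Finset.range J, θ j ω ^ 2 * ((s (j + 1) - s j) * sqBessel γ (s j) ω)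

/-- Half the centred squared norm of a Brownian increment `x` over a time span `h`. -/
noncomputable def centredNormSq {d : ℕ} (h : ℝ) (x : EuclideanSpace ℝ (Fin d)) : ℝ :=
  (‖x‖ ^ 2 - d * h) / 2

/-- The weighted sum of the centred squared increments, which separates `innerSum` from the
transform of the martingale `(‖γ t‖² - d t) / 2`. -/
noncomputable def errorSum {Ω : Type*} {d : ℕ} (γ : ℝ → Ω → EuclideanSpace ℝ (Fin d)) (s : ℕ → ℝ)
    (θ : ℕ → Ω → ℝ) (J : ℕ) (ω : Ω) : ℝ :=
  ∑ j ∈ Finset.range J, θ j ω * centredNormSq (s (j + 1) - s j) (γ (s (j + 1)) ω - γ (s j) ω)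

/-- The martingale `(‖γ t‖² - d t) / 2`, which the time change turns into a Brownian motion. -/
noncomputable def sqBesselMartingale {Ω : Type*} {d : ℕ} (γ : ℝ → Ω → EuclideanSpace ℝ (Fin d))
    (t : ℝ) (ω : Ω) : ℝ :=
  (sqBessel γ t ω - d * t) / 2

theorem sum_mul_sqBesselMartingale_sub {Ω : Type*} {d : ℕ}
    (γ : ℝ → Ω → EuclideanSpace ℝ (Fin d)) (s : ℕ → ℝ) (θ : ℕ → Ω → ℝ) (J : ℕ) (ω : Ω) :
    ∑ j ∈ Finset.range J,
        θ j ω * (sqBesselMartingale γ (s (j + 1)) ω - sqBesselMartingale γ (s j) ω) =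
      innerSum γ s θ J ω + errorSum γ s θ J ω := by
  rw [innerSum, errorSum, ← Finset.sum_add_distrib]
  refine Finset.sum_congr rfl fun j _ => ?_
  rw [← mul_add, sqBesselMartingale, sqBesselMartingale, centredNormSq]
  linear_combination θ j ω / 2 * sqBessel_sub_sqBessel (γ := γ) (s j) (s (j + 1)) ω

section PredictableSums

variable {Ω : Type*} {d : ℕ} {γ : ℝ → Ω → EuclideanSpace ℝ (Fin d)} {s : ℕ → ℝ} {θ : ℕ → Ω → ℝ}

theorem measurable_past_increment {a b c : ℝ} (ha : 0 ≤ a) (hab : a ≤ b) (hbc : b ≤ c) :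
    Measurable[past γ c] fun ω => γ b ω - γ a ω :=
  (measurable_past (ha.trans hab) hbc).sub (measurable_past ha (hab.trans hbc))

theorem measurable_past_innerSum (hs₀ : ∀ j, 0 ≤ s j) (hs : Monotone s)
    (hθ : ∀ j, Measurable[past γ (s j)] (θ j)) (J : ℕ) :
    Measurable[past γ (s J)] (innerSum γ s θ J) := by
  refine Finset.measurable_fun_sum _ fun j hj => ?_
  have hj : j + 1 ≤ J := Finset.mem_range.1 hj
  exact ((hθ j).mono (past_mono (hs (Nat.le_of_succ_le hj))) le_rfl).mul
    ((measurable_past (hs₀ j) (hs (Nat.le_of_succ_le hj))).inner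
      (measurable_past_increment (hs₀ j) (hs j.le_succ) (hs hj)))

theorem measurable_past_bracketSum (hs₀ : ∀ j, 0 ≤ s j)
    (hθ : ∀ j, Measurable[past γ (s j)] (θ j)) {J : ℕ} {T : ℝ} (hT : ∀ j < J, s j ≤ T) :
    Measurable[past γ T] (bracketSum γ s θ J) := by
  refine Finset.measurable_fun_sum _ fun j hj => ?_
  have hj : s j ≤ T := hT j (Finset.mem_range.1 hj)
  exact (((hθ j).mono (past_mono hj) le_rfl).pow_const 2).mul
    ((measurable_sqBessel_past (hs₀ j) hj).const_mul _)

theorem measurable_centredNormSq (h : ℝ) : Measurable (centredNormSq (d := d) h) :=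
  ((measurable_norm.pow_const 2).sub_const _).div_const 2

theorem measurable_past_errorSum (hs₀ : ∀ j, 0 ≤ s j) (hs : Monotone s)
    (hθ : ∀ j, Measurable[past γ (s j)] (θ j)) (J : ℕ) :
    Measurable[past γ (s J)] (errorSum γ s θ J) := by
  refine Finset.measurable_fun_sum _ fun j hj => ?_
  have hj : j + 1 ≤ J := Finset.mem_range.1 hj
  exact ((hθ j).mono (past_mono (hs (Nat.le_of_succ_le hj))) le_rfl).mul
    ((measurable_centredNormSq _).comp
      (measurable_past_increment (hs₀ j) (hs j.le_succ) (hs hj)))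

end PredictableSums

namespace IsStdBMVec

variable {Ω : Type*} [MeasurableSpace Ω] {P : Measure Ω} [IsProbabilityMeasure P] {d : ℕ}
  {γ : ℝ → Ω → EuclideanSpace ℝ (Fin d)} {s : ℕ → ℝ} {θ : ℕ → Ω → ℝ}

theorem integral_mul_cexp_inner_increment (hγ : IsStdBMVec d P γ) {a b : ℝ} (ha : 0 ≤ a)
    (hab : a ≤ b) {Z : Ω → ℂ} {W : Ω → EuclideanSpace ℝ (Fin d)} (hZ : Measurable[past γ a] Z)
    (hW : Measurable[past γ a] W) (hint : Integrable Z P) :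
    ∫ ω, Z ω * Complex.exp (⟪γ b ω - γ a ω, W ω⟫ * Complex.I) ∂P =
      ∫ ω, Z ω * Complex.exp (-((b - a) * ‖W ω‖ ^ 2 / 2 : ℝ)) ∂P := by
  rw [integral_mul_cexp_inner_of_indepFun (hγ.measurable_of_past hZ) (hγ.measurable_of_past hW)
    (hγ.measurable_increment a b) hint (hγ.indepFun_increment ha hab (hZ.prodMk hW))]
  simp_rw [hγ.charFun_increment ha hab]

theorem integral_expPhase_bracketSum_innerSum (hγ : IsStdBMVec d P γ)
    (hs₀ : ∀ j, 0 ≤ s j) (hs : Monotone s) (hθ : ∀ j, Measurable[past γ (s j)] (θ j)) {C : ℝ}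
    (hC : ∀ J ω, bracketSum γ s θ J ω ≤ C) (J : ℕ) :
    ∫ ω, expPhase (bracketSum γ s θ J ω) (innerSum γ s θ J ω) ∂P = 1 := by
  induction J with
  | zero => simp [expPhase, bracketSum, innerSum]
  | succ J ih =>
    let Z : Ω → ℂ := fun ω => expPhase (bracketSum γ s θ (J + 1) ω) (innerSum γ s θ J ω)
    let W : Ω → EuclideanSpace ℝ (Fin d) := fun ω => θ J ω • γ (s J) ω
    have bracket_meas := measurable_past_bracketSum hs₀ hθ (J := J + 1) fun j hj =>
      hs (Nat.lt_succ_iff.1 hj)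
    have inner_meas := measurable_past_innerSum hs₀ hs hθ J
    have hZ : Measurable[past γ (s J)] Z := measurable_expPhase bracket_meas inner_meas
    have hW : Measurable[past γ (s J)] W := (hθ J).smul (measurable_past (hs₀ J) le_rfl)
    have hZ_int : Integrable Z P := integrable_expPhase (hγ.measurable_of_past bracket_meas)
      (hγ.measurable_of_past inner_meas) (hC (J + 1))
    calc ∫ ω, expPhase (bracketSum γ s θ (J + 1) ω) (innerSum γ s θ (J + 1) ω) ∂P
        = ∫ ω, Z ω * Complex.exp (⟪γ (s (J + 1)) ω - γ (s J) ω, W ω⟫ * Complex.I) ∂P := by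
          refine integral_congr_ae (ae_of_all _ fun ω => ?_)
          simp only [Z, W, innerSum, Finset.sum_range_succ, real_inner_smul_right,
            real_inner_comm (γ (s J) ω), expPhase_add_right]
      _ = ∫ ω, Z ω * Complex.exp (-((s (J + 1) - s J) * ‖W ω‖ ^ 2 / 2 : ℝ)) ∂P :=
          hγ.integral_mul_cexp_inner_increment (hs₀ J) (hs J.le_succ) hZ hW hZ_int
      _ = 1 := by
          rw [← ih]
          refine integral_congr_ae (ae_of_all _ fun ω => ?_)
          simp only [Z]
          rw [← Complex.ofReal_neg, ← Complex.ofReal_exp, ← neg_div, ← expPhase_add_left,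
            bracketSum, Finset.sum_range_succ, ← bracketSum, norm_smul, mul_pow,
            Real.norm_eq_abs, sq_abs, ← sqBessel]
          congr 1
          ring

theorem hasAllMoments_centredNormSq (hγ : IsStdBMVec d P γ) {a b : ℝ} (ha : 0 ≤ a) (hab : a ≤ b)
    (h : ℝ) : HasAllMoments P fun ω => centredNormSq h (γ b ω - γ a ω) := by
  simp_rw [centredNormSq, div_eq_inv_mul]
  exact ((hγ.hasAllMoments_norm_sq_increment ha hab).sub (.const _)).const_mul _

theorem integral_centredNormSq (hγ : IsStdBMVec d P γ) {a b : ℝ} (ha : 0 ≤ a) (hab : a ≤ b) :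
    ∫ ω, centredNormSq (b - a) (γ b ω - γ a ω) ∂P = 0 := by
  simp_rw [centredNormSq]
  rw [integral_div, integral_sub (hγ.hasAllMoments_norm_sq_increment ha hab).integrable
    (integrable_const _), hγ.integral_norm_sq_increment ha hab, integral_const, probReal_univ,
    one_smul, sub_self, zero_div]

theorem integral_centredNormSq_sq_le (hγ : IsStdBMVec d P γ) {a b : ℝ} (ha : 0 ≤ a)
    (hab : a ≤ b) : ∫ ω, centredNormSq (b - a) (γ b ω - γ a ω) ^ 2 ∂P ≤
      d ^ 2 * gaussianFourthMoment * (b - a) ^ 2 := by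
  have moments := hγ.hasAllMoments_norm_sq_increment ha hab
  have var_le := variance_le_expectation_sq moments.integrable.aestronglyMeasurable
  rw [variance_eq_integral moments.integrable.aemeasurable,
    hγ.integral_norm_sq_increment ha hab] at var_le
  have bound := var_le.trans (hγ.integral_norm_sq_increment_sq_le ha hab)
  have nonneg : 0 ≤ ∫ ω, (‖γ b ω - γ a ω‖ ^ 2 - d * (b - a)) ^ 2 ∂P :=
    integral_nonneg fun ω => sq_nonneg _
  simp_rw [centredNormSq, div_pow]
  rw [integral_div]
  linarith

theorem hasAllMoments_errorSum (hγ : IsStdBMVec d P γ) (hs₀ : ∀ j, 0 ≤ s j) (hs : Monotone s)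
    (hθ : ∀ j, HasAllMoments P (θ j)) (J : ℕ) : HasAllMoments P (errorSum γ s θ J) :=
  HasAllMoments.sum _ fun j _ =>
    (hθ j).mul (hγ.hasAllMoments_centredNormSq (hs₀ j) (hs j.le_succ) _)

theorem integral_errorSum_sq_le (hγ : IsStdBMVec d P γ) (hs₀ : ∀ j, 0 ≤ s j) (hs : Monotone s)
    (hθ : ∀ j, Measurable[past γ (s j)] (θ j)) {K : ℝ} (hK : ∀ j ω, |θ j ω| ≤ K) (J : ℕ) :
    ∫ ω, errorSum γ s θ J ω ^ 2 ∂P ≤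
      K ^ 2 * (d ^ 2 * gaussianFourthMoment) * ∑ j ∈ Finset.range J, (s (j + 1) - s j) ^ 2 := by
  have moments_θ (j : ℕ) : HasAllMoments P (θ j) := .of_bound (hγ.measurable_of_past (hθ j)) (hK j)
  induction J with
  | zero => simp [errorSum]
  | succ J ih =>
    let η : Ω → ℝ := fun ω => centredNormSq (s (J + 1) - s J) (γ (s (J + 1)) ω - γ (s J) ω)
    have moments_E := hγ.hasAllMoments_errorSum hs₀ hs moments_θ J
    have moments_η : HasAllMoments P η :=
      hγ.hasAllMoments_centredNormSq (hs₀ J) (hs J.le_succ) _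
    have orthogonal : ∫ ω, errorSum γ s θ J ω * θ J ω * η ω ∂P = 0 := by
      have predictable : Measurable[past γ (s J)] fun ω => errorSum γ s θ J ω * θ J ω :=
        (measurable_past_errorSum hs₀ hs hθ J).mul (hθ J)
      rw [hγ.integral_mul_comp_increment (hs₀ J) (hs J.le_succ) predictable
        (measurable_centredNormSq _),
        hγ.integral_centredNormSq (hs₀ J) (hs J.le_succ), mul_zero]
    have last_term : ∫ ω, θ J ω ^ 2 * η ω ^ 2 ∂P ≤
        K ^ 2 * (d ^ 2 * gaussianFourthMoment * (s (J + 1) - s J) ^ 2) := by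
      refine (integral_mono ((moments_θ J).sq.mul moments_η.sq).integrable
        (moments_η.sq.const_mul (K ^ 2)).integrable fun ω => ?_).trans ?_
      · exact mul_le_mul_of_nonneg_right (sq_le_sq' (abs_le.1 (hK J ω)).1 (abs_le.1 (hK J ω)).2)
          (sq_nonneg _)
      · rw [integral_const_mul]
        exact mul_le_mul_of_nonneg_left
          (hγ.integral_centredNormSq_sq_le (hs₀ J) (hs J.le_succ)) (sq_nonneg K)
    have expand (ω : Ω) : errorSum γ s θ (J + 1) ω ^ 2 = errorSum γ s θ J ω ^ 2 +
        (2 * (errorSum γ s θ J ω * θ J ω * η ω) + θ J ω ^ 2 * η ω ^ 2) := by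
      rw [errorSum, Finset.sum_range_succ, ← errorSum]
      ring
    have cross := ((moments_E.mul (moments_θ J)).mul moments_η).const_mul 2
    have last := (moments_θ J).sq.mul moments_η.sq
    simp_rw [expand]
    rw [integral_add moments_E.sq.integrable (cross.add last).integrable,
      integral_add cross.integrable last.integrable,
      integral_const_mul, orthogonal, Finset.sum_range_succ, mul_add]
    linarith

end IsStdBMVec

/-! ### Counting an initial segment -/

section Count

variable {p : ℕ → Prop} [DecidablePred p]

theorem lt_count_iff_of_antitone (hp : Antitone p) {j J : ℕ} (hj : j < J) :
    j < Nat.count p J ↔ p j := by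
  constructor
  · intro hlt
    by_contra hpj
    have stuck : ∀ n, j ≤ n → Nat.count p n = Nat.count p j := fun n hn => by
      induction n, hn using Nat.le_induction with
      | base => rfl
      | succ n hn ih => rw [Nat.count_succ, if_neg fun hpn => hpj (hp hn hpn), ih, add_zero]
    exact absurd (stuck J hj.le ▸ hlt) (Nat.count_le p).not_gt
  · intro hpj
    have full : Nat.count p (j + 1) = j + 1 :=
      Nat.count_iff_forall.2 fun i hi => hp (Nat.lt_succ_iff.1 hi) hpj
    exact full.symm.le.trans (Nat.count_monotone p hj)

theorem sum_ite_sub_of_antitone {M : Type*} [AddCommGroup M] (hp : Antitone p) (f : ℕ → M)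
    (J : ℕ) : (∑ j ∈ Finset.range J, if p j then f (j + 1) - f j else 0) =
      f (Nat.count p J) - f 0 := by
  induction J with
  | zero => simp
  | succ J ih =>
    rw [Finset.sum_range_succ, ih, Nat.count_succ]
    split_ifs with hpJ
    · rw [Nat.count_iff_forall.2 fun i hi => hp hi.le hpJ, add_comm, sub_add_sub_cancel]
    · rw [add_zero, add_zero]

end Count

/-! ### Riemann sums and their inverses -/

/-- The left Riemann sum of `u` with mesh `h` and `m` terms. -/
def riemannSum (h : ℝ) (u : ℝ → ℝ) (m : ℕ) : ℝ :=
  ∑ j ∈ Finset.range m, h * u (j * h)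

theorem riemannSum_zero (h : ℝ) (u : ℝ → ℝ) : riemannSum h u 0 = 0 := Finset.sum_range_zero _

theorem riemannSum_succ (h : ℝ) (u : ℝ → ℝ) (m : ℕ) :
    riemannSum h u (m + 1) = riemannSum h u m + h * u (m * h) := Finset.sum_range_succ _ _

theorem riemannSum_mono {h : ℝ} (hh : 0 ≤ h) {u : ℝ → ℝ} (hu : ∀ t, 0 ≤ u t) :
    Monotone (riemannSum h u) :=
  monotone_nat_of_le_succ fun m => by
    rw [riemannSum_succ]
    exact le_add_of_nonneg_right (mul_nonneg hh (hu _))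

theorem abs_riemannSum_sub_integral_le {u : ℝ → ℝ} (hu : Continuous u) {T ε δ : ℝ}
    (modulus : ∀ x ∈ Icc 0 T, ∀ y ∈ Icc 0 T, dist x y < δ → dist (u x) (u y) < ε) {h : ℝ}
    (h_pos : 0 < h) (h_lt : h < δ) {m : ℕ} (hm : m * h ≤ T) :
    |riemannSum h u m - ∫ s in (0 : ℝ)..(m * h), u s| ≤ ε * (m * h) := by
  induction m with
  | zero => simp [riemannSum_zero]
  | succ m ih =>
    have next : ((m + 1 : ℕ) : ℝ) * h = m * h + h := by push_cast; ring
    have start : 0 ≤ (m : ℝ) * h := by positivity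
    rw [next] at hm ⊢
    have block : |∫ s in (m * h : ℝ)..(m * h + h), (u (m * h) - u s)| ≤ ε * h := by
      have := intervalIntegral.norm_integral_le_of_norm_le_const (C := ε)
        (f := fun s => u (m * h) - u s) (a := m * h) (b := m * h + h) fun x hx => by
          rw [uIoc_of_le (by linarith)] at hx
          refine (modulus _ ⟨start, by linarith⟩ x ⟨by linarith [hx.1], hx.2.trans hm⟩ ?_).le
          rw [dist_comm, Real.dist_eq, abs_of_pos (sub_pos.2 hx.1)]
          linarith [hx.2]
      rwa [add_sub_cancel_left, abs_of_pos h_pos] at this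
    rw [intervalIntegral.integral_sub (by simp) (hu.intervalIntegrable _ _),
      intervalIntegral.integral_const, add_sub_cancel_left, smul_eq_mul] at block
    rw [riemannSum_succ, ← intervalIntegral.integral_add_adjacent_intervals
      (hu.intervalIntegrable 0 (m * h)) (hu.intervalIntegrable (m * h) (m * h + h)),
      add_sub_add_comm, mul_add]
    exact (abs_add_le _ _).trans (add_le_add (ih (by linarith)) block)

theorem tendsto_floor_div_mul {h : ℕ → ℝ} (h_pos : ∀ k, 0 < h k) (h_lim : Tendsto h atTop (𝓝 0))
    {d : ℝ} (hd : 0 ≤ d) : Tendsto (fun k => (⌊d / h k⌋₊ : ℝ) * h k) atTop (𝓝 d) := by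
  have h_inv : Tendsto (fun k => (h k)⁻¹) atTop atTop :=
    tendsto_inv_nhdsGT_zero.comp (tendsto_nhdsWithin_iff.2 ⟨h_lim, .of_forall h_pos⟩)
  simpa only [Function.comp_def, div_inv_eq_mul, ← div_eq_mul_inv] using
    (tendsto_nat_floor_mul_div_atTop hd).comp h_inv

theorem tendsto_riemannSum {u : ℝ → ℝ} (hu : Continuous u) {h : ℕ → ℝ} (h_pos : ∀ k, 0 < h k)
    (h_lim : Tendsto h atTop (𝓝 0)) {m : ℕ → ℕ} {c : ℝ}
    (hm : Tendsto (fun k => m k * h k) atTop (𝓝 c)) :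
    Tendsto (fun k => riemannSum (h k) u (m k)) atTop (𝓝 (∫ s in (0 : ℝ)..c, u s)) := by
  have c_nonneg : 0 ≤ c := ge_of_tendsto' hm fun k => mul_nonneg (m k).cast_nonneg (h_pos k).le
  have primitive_lim : Tendsto (fun k => ∫ s in (0 : ℝ)..(m k * h k), u s) atTop
      (𝓝 (∫ s in (0 : ℝ)..c, u s)) :=
    ((intervalIntegral.continuous_primitive (fun x y => hu.intervalIntegrable x y) 0).tendsto
      c).comp hm
  refine primitive_lim.congr_dist (Metric.tendsto_nhds.2 fun ε hε => ?_)
  obtain ⟨δ, hδ, modulus⟩ := Metric.uniformContinuousOn_iff.1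
    (isCompact_Icc.uniformContinuousOn_of_continuous hu.continuousOn (s := Icc 0 (c + 1)))
    (ε / (c + 1) / 2) (by positivity)
  filter_upwards [h_lim.eventually (gt_mem_nhds hδ), hm.eventually (ge_mem_nhds (lt_add_one c))]
    with k hk_lt hk_le
  rw [dist_zero_right, Real.norm_of_nonneg dist_nonneg, dist_comm, Real.dist_eq]
  calc |riemannSum (h k) u (m k) - ∫ s in (0 : ℝ)..(m k * h k), u s|
      ≤ ε / (c + 1) / 2 * (m k * h k) :=
        abs_riemannSum_sub_integral_le hu modulus (h_pos k) hk_lt hk_le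
    _ ≤ ε / (c + 1) / 2 * (c + 1) := by gcongr
    _ < ε := by rw [div_right_comm, div_mul_cancel₀ _ (by positivity)]; exact half_lt_self hε

open Classical in
/-- The inverse of `riemannSum h u` at level `r`, truncated at `J`: the number of indices `j < J`
with `riemannSum h u (j + 1) ≤ r`. -/
noncomputable def riemannInverse (h : ℝ) (u : ℝ → ℝ) (J : ℕ) (r : ℝ) : ℕ :=
  Nat.count (fun j => riemannSum h u (j + 1) ≤ r) J

section RiemannInverse

variable {h : ℝ} {u : ℝ → ℝ} {r : ℝ} {J m : ℕ}

theorem riemannInverse_le : riemannInverse h u J r ≤ J := by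
  classical exact Nat.count_le _

theorem antitone_riemannSum_le (hh : 0 ≤ h) (hu : ∀ t, 0 ≤ u t) :
    Antitone fun j => riemannSum h u (j + 1) ≤ r := fun _ _ hij hj =>
  (riemannSum_mono hh hu (Nat.succ_le_succ hij)).trans hj

theorem le_riemannInverse_iff (hh : 0 ≤ h) (hu : ∀ t, 0 ≤ u t) (hr : 0 ≤ r) (hm : m ≤ J) :
    m ≤ riemannInverse h u J r ↔ riemannSum h u m ≤ r := by
  classical
  rcases m with - | m
  · simpa [riemannSum_zero] using hr
  · exact lt_count_iff_of_antitone (antitone_riemannSum_le hh hu) hm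

open Classical in
theorem sum_ite_riemannSum_le (hh : 0 ≤ h) (hu : ∀ t, 0 ≤ u t) (f : ℕ → ℝ) :
    (∑ j ∈ Finset.range J, if riemannSum h u (j + 1) ≤ r then f (j + 1) - f j else 0) =
      f (riemannInverse h u J r) - f 0 :=
  sum_ite_sub_of_antitone (antitone_riemannSum_le hh hu) f J

end RiemannInverse

/-! ### Time changes -/

/-- The clock `A(t) = ∫₀ᵗ u` run at rate `u`. -/
noncomputable def clock (u : ℝ → ℝ) (t : ℝ) : ℝ := ∫ s in (0 : ℝ)..t, u s

/-- Rates whose clock is an increasing bijection of `[0, ∞)`. -/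
structure IsClockRate (u : ℝ → ℝ) : Prop where
  continuous : Continuous u
  nonneg : ∀ t, 0 ≤ u t
  strictMonoOn : StrictMonoOn (clock u) (Ici 0)
  tendsto_atTop : Tendsto (clock u) atTop atTop

/-- The inverse of the clock of `u`, which is `0` on `(-∞, 0]` if `u` is an `IsClockRate`. -/
noncomputable def timeChange (u : ℝ → ℝ) (r : ℝ) : ℝ := sInf {t | 0 ≤ t ∧ r ≤ clock u t}

theorem clock_zero (u : ℝ → ℝ) : clock u 0 = 0 := intervalIntegral.integral_same

theorem continuous_clock {u : ℝ → ℝ} (hu : Continuous u) : Continuous (clock u) :=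
  intervalIntegral.continuous_primitive (fun x y => hu.intervalIntegrable x y) 0

theorem timeChange_nonneg (u : ℝ → ℝ) (r : ℝ) : 0 ≤ timeChange u r :=
  Real.sInf_nonneg fun _ ht => ht.1

namespace IsClockRate

variable {u : ℝ → ℝ} {r t : ℝ}

theorem clock_nonneg (hu : IsClockRate u) (ht : 0 ≤ t) : 0 ≤ clock u t :=
  intervalIntegral.integral_nonneg ht fun s _ => hu.nonneg s

theorem exists_clock_eq (hu : IsClockRate u) (hr : 0 ≤ r) : ∃ t, 0 ≤ t ∧ clock u t = r := by
  obtain ⟨T, hT, T_nonneg⟩ :=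
    ((hu.tendsto_atTop.eventually_ge_atTop r).and (eventually_ge_atTop 0)).exists
  obtain ⟨t, ht, rfl⟩ := intermediate_value_Icc T_nonneg
    (continuous_clock hu.continuous).continuousOn ⟨(clock_zero u).trans_le hr, hT⟩
  exact ⟨t, ht.1, rfl⟩

theorem timeChange_clock (hu : IsClockRate u) (ht : 0 ≤ t) : timeChange u (clock u t) = t := by
  have : {t' | 0 ≤ t' ∧ clock u t ≤ clock u t'} = Ici t := by
    ext t'
    refine ⟨fun h => (hu.strictMonoOn.le_iff_le ht h.1).1 h.2, fun h => ?_⟩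
    exact ⟨ht.trans h, (hu.strictMonoOn.le_iff_le ht (ht.trans h)).2 h⟩
  rw [timeChange, this, csInf_Ici]

theorem timeChange_of_nonpos (hu : IsClockRate u) (hr : r ≤ 0) : timeChange u r = 0 := by
  have : {t | 0 ≤ t ∧ r ≤ clock u t} = Ici 0 := by
    ext t
    exact ⟨And.left, fun ht => ⟨ht, hr.trans (hu.clock_nonneg ht)⟩⟩
  rw [timeChange, this, csInf_Ici]

theorem clock_timeChange (hu : IsClockRate u) (r : ℝ) : clock u (timeChange u r) = max r 0 := by
  rcases le_or_gt r 0 with hr | hr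
  · rw [hu.timeChange_of_nonpos hr, clock_zero, max_eq_right hr]
  · obtain ⟨t, ht, rfl⟩ := hu.exists_clock_eq hr.le
    rw [hu.timeChange_clock ht, max_eq_left hr.le]

theorem timeChange_le_iff (hu : IsClockRate u) (ht : 0 ≤ t) :
    timeChange u r ≤ t ↔ r ≤ clock u t := by
  rw [← hu.strictMonoOn.le_iff_le (timeChange_nonneg u r) ht, hu.clock_timeChange, max_le_iff,
    and_iff_left (hu.clock_nonneg ht)]

theorem monotone_timeChange (hu : IsClockRate u) : Monotone (timeChange u) := fun r r' hr => by
  rw [hu.timeChange_le_iff (timeChange_nonneg u r'), hu.clock_timeChange]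
  exact hr.trans (le_max_left _ _)

theorem continuous_timeChange (hu : IsClockRate u) : Continuous (timeChange u) := by
  let C : ℝ → ℝ≥0 := fun r => ⟨timeChange u r, timeChange_nonneg u r⟩
  have mono : Monotone C := fun r r' hr => hu.monotone_timeChange hr
  have surj : Function.Surjective C := fun t => ⟨clock u t, Subtype.ext (hu.timeChange_clock t.2)⟩
  exact NNReal.continuous_coe.comp (mono.continuous_of_surjective surj)

theorem tendsto_riemannInverse_mul (hu : IsClockRate u) (hr : 0 ≤ r) {h : ℕ → ℝ}
    (h_pos : ∀ k, 0 < h k) (h_lim : Tendsto h atTop (𝓝 0)) {J : ℕ → ℕ}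
    (hJ : Tendsto (fun k => J k * h k) atTop atTop) :
    Tendsto (fun k => riemannInverse (h k) u (J k) r * h k) atTop (𝓝 (timeChange u r)) := by
  obtain ⟨c, hc, rfl⟩ := hu.exists_clock_eq hr
  rw [hu.timeChange_clock hc]
  have floor_lim {d : ℝ} (hd : 0 ≤ d) := tendsto_floor_div_mul h_pos h_lim hd
  have mesh_le {k m n : ℕ} (hmn : m ≤ n) : (m : ℝ) * h k ≤ n * h k :=
    mul_le_mul_of_nonneg_right (Nat.cast_le.2 hmn) (h_pos k).le
  have c_level : 0 ≤ clock u c := hu.clock_nonneg hc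
  refine tendsto_order.2 ⟨fun b hb => ?_, fun b hb => ?_⟩
  · rcases lt_or_ge b 0 with hb_neg | hb_nonneg
    · exact .of_forall fun k => hb_neg.trans_le (mul_nonneg (Nat.cast_nonneg _) (h_pos k).le)
    obtain ⟨d, hbd, hdc⟩ := exists_between hb
    have hd := hb_nonneg.trans hbd.le
    have below := (tendsto_riemannSum hu.continuous h_pos h_lim (floor_lim hd)).eventually_lt_const
      (hu.strictMonoOn hd hc hdc)
    filter_upwards [below, (floor_lim hd).eventually_const_lt hbd,
      (floor_lim hd).eventually_lt_const (lt_add_one d), hJ.eventually_ge_atTop (d + 1)]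
      with k hk_sum hk_gt hk_lt hkJ
    have floor_le : ⌊d / h k⌋₊ ≤ J k :=
      Nat.cast_le.1 (le_of_mul_le_mul_right (hk_lt.le.trans hkJ) (h_pos k))
    exact hk_gt.trans_le
      (mesh_le ((le_riemannInverse_iff (h_pos k).le hu.nonneg c_level floor_le).2 hk_sum.le))
  · obtain ⟨d, hcd, hdb⟩ := exists_between hb
    have hd := hc.trans hcd.le
    have above := (tendsto_riemannSum hu.continuous h_pos h_lim (floor_lim hd)).eventually_const_lt
      (hu.strictMonoOn hc hd hcd)
    filter_upwards [above, (floor_lim hd).eventually_lt_const hdb] with k hk_sum hk_lt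
    refine (mesh_le (le_of_not_gt fun hlt => hk_sum.not_ge ?_)).trans_lt hk_lt
    exact (le_riemannInverse_iff (h_pos k).le hu.nonneg c_level (hlt.le.trans
      riemannInverse_le)).1 hlt.le

end IsClockRate

/-! ### The clock of the squared Bessel process -/

section RandomClock

variable {Ω : Type*} [MeasurableSpace Ω] {P : Measure Ω} {u : ℝ → Ω → ℝ}

theorem measurable_clock (hu : Measurable (Function.uncurry u)) {t : ℝ} (ht : 0 ≤ t) :
    Measurable fun ω => clock (fun s => u s ω) t := by
  simp_rw [clock, intervalIntegral.integral_of_le ht]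
  have : Measurable (Function.uncurry fun ω s => u s ω) := hu.comp measurable_swap
  exact (this.stronglyMeasurable.integral_prod_right (ν := volume.restrict (Ioc 0 t))).measurable

theorem monotone_clock {u : ℝ → ℝ} (hu : Continuous u) (nonneg : ∀ t, 0 ≤ u t) :
    Monotone (clock u) := fun s t hst => by
  rw [← sub_nonneg, clock, clock, intervalIntegral.integral_interval_sub_left
    (hu.intervalIntegrable _ _) (hu.intervalIntegrable _ _)]
  exact intervalIntegral.integral_nonneg hst fun x _ => nonneg x

theorem sub_clock_le_volume_lt_one {u : ℝ → ℝ} (hu : Continuous u) (nonneg : ∀ t, 0 ≤ u t)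
    {t T : ℝ} (ht : 0 ≤ t) (hT : 0 ≤ T) :
    T - clock u (t + T) ≤ (volume.restrict (Ioc t (t + T))).real {s | u s < 1} := by
  let μ := volume.restrict (Ioc t (t + T))
  have total : μ.real {s | u s < 1} + μ.real {s | 1 ≤ u s} = T := by
    have compl : {s | 1 ≤ u s} = {s | u s < 1}ᶜ := by ext; simp
    rw [compl, measureReal_add_measureReal_compl (measurableSet_lt hu.measurable measurable_const)]
    simp [μ, hT]
  have markov : μ.real {s | 1 ≤ u s} ≤ clock u (t + T) := by
    have tail : ∫ s, u s ∂μ = clock u (t + T) - clock u t := by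
      rw [clock, clock, intervalIntegral.integral_interval_sub_left (hu.intervalIntegrable _ _)
        (hu.intervalIntegrable _ _), intervalIntegral.integral_of_le (le_add_of_nonneg_right hT)]
    have := mul_meas_ge_le_integral_of_nonneg (μ := μ) (ae_of_all _ nonneg)
      (hu.integrableOn_Ioc) 1
    have := intervalIntegral.integral_nonneg (μ := volume) ht fun x _ => nonneg x
    rw [← clock] at this
    linarith
  linarith

theorem measure_clock_le_half_le [SFinite P] (hu : Measurable (Function.uncurry u))
    (cont : ∀ ω, Continuous fun t => u t ω) (nonneg : ∀ t ω, 0 ≤ u t ω) {t T : ℝ} (ht : 0 ≤ t)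
    (hT : 0 < T) {ε : ℝ≥0∞} (small : ∀ s, t ≤ s → P {ω | u s ω < 1} ≤ ε) :
    P {ω | clock (fun s => u s ω) (t + T) ≤ T / 2} ≤ 2 * ε := by
  let μ := volume.restrict (Ioc t (t + T))
  let low : Set (ℝ × Ω) := {p | u p.1 p.2 < 1}
  have low_meas : MeasurableSet low := measurableSet_lt hu measurable_const
  let V : Ω → ℝ≥0∞ := fun ω => μ {s | u s ω < 1}
  have V_meas : Measurable V := measurable_measure_prodMk_right low_meas
  have V_mean : ∫⁻ ω, V ω ∂P ≤ ε * ENNReal.ofReal T := by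
    calc ∫⁻ ω, V ω ∂P = (μ.prod P) low := (Measure.prod_apply_symm low_meas).symm
      _ = ∫⁻ s, P {ω | u s ω < 1} ∂μ := Measure.prod_apply low_meas
      _ ≤ ∫⁻ _, ε ∂μ := setLIntegral_mono' measurableSet_Ioc fun s hs => small s hs.1.le
      _ = ε * ENNReal.ofReal T := by simp [μ]
  have V_large {ω : Ω} (hω : clock (fun s => u s ω) (t + T) ≤ T / 2) :
      ENNReal.ofReal (T / 2) ≤ V ω := by
    refine ENNReal.ofReal_le_of_le_toReal (le_trans ?_
      (sub_clock_le_volume_lt_one (cont ω) (fun t => nonneg t ω) ht hT.le))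
    linarith
  calc P {ω | clock (fun s => u s ω) (t + T) ≤ T / 2}
      ≤ P {ω | ENNReal.ofReal (T / 2) ≤ V ω} := measure_mono fun ω hω => V_large hω
    _ ≤ (∫⁻ ω, V ω ∂P) / ENNReal.ofReal (T / 2) :=
        meas_ge_le_lintegral_div V_meas.aemeasurable (by simpa using hT) ENNReal.ofReal_ne_top
    _ ≤ ε * ENNReal.ofReal T / ENNReal.ofReal (T / 2) := by gcongr
    _ = 2 * ε := by
        rw [mul_div_assoc, ← ENNReal.ofReal_div_of_pos (half_pos hT), div_div_cancel₀ hT.ne',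
          ENNReal.ofReal_ofNat, mul_comm]

theorem ae_tendsto_clock_atTop [SFinite P] (hu : Measurable (Function.uncurry u))
    (cont : ∀ ω, Continuous fun t => u t ω) (nonneg : ∀ t ω, 0 ≤ u t ω)
    (small : Tendsto (fun s => P {ω | u s ω < 1}) atTop (𝓝 0)) :
    ∀ᵐ ω ∂P, Tendsto (clock fun t => u t ω) atTop atTop := by
  have reaches (n : ℕ) : ∀ᵐ ω ∂P, ∃ t, (n : ℝ) ≤ clock (fun s => u s ω) t := by
    rw [ae_iff, ← nonpos_iff_eq_zero]
    refine le_of_forall_pos_le_add fun ε hε => ?_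
    obtain ⟨t₀, ht₀⟩ := eventually_atTop.1
      (small.eventually (ge_mem_nhds (ENNReal.half_pos hε.ne')))
    have bound := measure_clock_le_half_le hu cont nonneg (le_max_right t₀ 0)
      (T := 2 * (n + 1)) (by positivity) fun s hs => ht₀ s ((le_max_left t₀ 0).trans hs)
    rw [ENNReal.mul_div_cancel two_ne_zero ENNReal.ofNat_ne_top] at bound
    rw [zero_add]
    refine (measure_mono fun ω hω => ?_).trans bound
    have hω := not_exists.1 hω (max t₀ 0 + 2 * (n + 1))
    simp only [mem_ofPred_eq]
    linarith
  filter_upwards [ae_all_iff.2 reaches] with ω hω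
  refine tendsto_atTop_atTop_of_monotone (monotone_clock (cont ω) fun t => nonneg t ω) fun b => ?_
  obtain ⟨n, hn⟩ := exists_nat_ge b
  exact (hω n).imp fun t ht => hn.trans ht

theorem strictMonoOn_clock {u : ℝ → ℝ} (hu : Continuous u) (nonneg : ∀ t, 0 ≤ u t)
    (pos : ∀ q : ℚ, 0 < q → 0 < u q) : StrictMonoOn (clock u) (Ici 0) := by
  intro s hs t _ hst
  rw [← sub_pos, clock, clock, intervalIntegral.integral_interval_sub_left
    (hu.intervalIntegrable _ _) (hu.intervalIntegrable _ _)]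
  obtain ⟨q, hsq, hqt⟩ := exists_rat_btwn hst
  exact intervalIntegral.integral_pos hst hu.continuousOn (fun x _ => nonneg x)
    ⟨q, ⟨hsq.le, hqt.le⟩, pos q (Rat.cast_pos.1 (hsq.trans_le' hs))⟩

end RandomClock

theorem gaussianReal_Icc_le (v : ℝ≥0) (hv : v ≠ 0) :
    gaussianReal 0 v (Icc (-1) 1) ≤ ENNReal.ofReal (2 / √v) := by
  rw [gaussianReal_apply 0 hv]
  calc ∫⁻ x in Icc (-1) 1, gaussianPDF 0 v x
      ≤ ∫⁻ _ in Icc (-1 : ℝ) 1, ENNReal.ofReal (√v)⁻¹ := by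
        refine lintegral_mono fun x => ENNReal.ofReal_le_ofReal ?_
        rw [gaussianPDFReal]
        refine (mul_le_of_le_one_right (by positivity) (Real.exp_le_one_iff.2 ?_)).trans ?_
        · exact div_nonpos_of_nonpos_of_nonneg (neg_nonpos.2 (sq_nonneg _)) (by positivity)
        · refine inv_anti₀ (Real.sqrt_pos.2 (by positivity)) (Real.sqrt_le_sqrt ?_)
          exact le_mul_of_one_le_left v.coe_nonneg (by linarith [Real.pi_gt_three])
    _ = ENNReal.ofReal (2 / √v) := by
        rw [setLIntegral_const, Real.volume_Icc, ← ENNReal.ofReal_mul (by positivity)]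
        congr 1
        ring

theorem coord_sq_le_sqBessel {Ω : Type*} {d : ℕ} {γ : ℝ → Ω → EuclideanSpace ℝ (Fin d)} (t : ℝ)
    (ω : Ω) (i : Fin d) : γ t ω i ^ 2 ≤ sqBessel γ t ω := by
  rw [sqBessel, EuclideanSpace.real_norm_sq_eq]
  exact Finset.single_le_sum (f := fun i => γ t ω i ^ 2) (fun i _ => sq_nonneg _)
    (Finset.mem_univ i)

namespace IsStdBMVec

variable {Ω : Type*} [MeasurableSpace Ω] {P : Measure Ω} {d : ℕ}
  {γ : ℝ → Ω → EuclideanSpace ℝ (Fin d)}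

theorem measurable_uncurry_sqBessel (hγ : IsStdBMVec d P γ) :
    Measurable (Function.uncurry (sqBessel γ)) :=
  measurable_uncurry_of_continuous_of_measurable hγ.continuous_sqBessel hγ.measurable_sqBessel

theorem map_coord (hγ : IsStdBMVec d P γ) {t : ℝ} (ht : 0 ≤ t) (i : Fin d) :
    P.map (fun ω => γ t ω i) = gaussianReal 0 t.toNNReal := by
  have := hγ.map_increment_coord le_rfl ht i
  simpa only [hγ.start, sub_zero] using this

variable [NeZero d]

theorem ae_sqBessel_pos (hγ : IsStdBMVec d P γ) {t : ℝ} (ht : 0 < t) :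
    ∀ᵐ ω ∂P, 0 < sqBessel γ t ω := by
  have := nullSingletonClass_gaussianReal (μ := 0) (Real.toNNReal_pos.2 ht).ne'
  have ne_zero : ∀ᵐ x ∂(P.map fun ω => γ t ω 0), x ≠ 0 := by
    rw [hγ.map_coord ht.le]
    exact compl_mem_ae_iff.2 (measure_singleton 0)
  filter_upwards [ae_of_ae_map ((hγ.coord 0).measurable t).aemeasurable ne_zero] with ω hω
  exact (sq_pos_of_ne_zero hω).trans_le (coord_sq_le_sqBessel t ω 0)

theorem measure_sqBessel_lt_one_le (hγ : IsStdBMVec d P γ) {t : ℝ} (ht : 0 < t) :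
    P {ω | sqBessel γ t ω < 1} ≤ ENNReal.ofReal (2 / √t) := by
  have coord_meas := (hγ.coord 0).measurable t
  calc P {ω | sqBessel γ t ω < 1} ≤ P ((fun ω => γ t ω 0) ⁻¹' Icc (-1) 1) :=
        measure_mono fun ω hω =>
          abs_le.1 (sq_le_one_iff_abs_le_one _ |>.1 ((coord_sq_le_sqBessel t ω 0).trans
            (le_of_lt hω)))
    _ = gaussianReal 0 t.toNNReal (Icc (-1) 1) := by
        rw [← hγ.map_coord ht.le 0, Measure.map_apply coord_meas measurableSet_Icc]
    _ ≤ ENNReal.ofReal (2 / √t) := by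
        simpa only [Real.coe_toNNReal t ht.le] using
          gaussianReal_Icc_le t.toNNReal (Real.toNNReal_pos.2 ht).ne'

theorem ae_isClockRate [SFinite P] (hγ : IsStdBMVec d P γ) :
    ∀ᵐ ω ∂P, IsClockRate fun t => sqBessel γ t ω := by
  have small : Tendsto (fun t => P {ω | sqBessel γ t ω < 1}) atTop (𝓝 0) := by
    have bound_lim : Tendsto (fun t => ENNReal.ofReal (2 / √t)) atTop (𝓝 0) := by
      rw [← ENNReal.ofReal_zero]
      exact ENNReal.tendsto_ofReal (Real.tendsto_sqrt_atTop.const_div_atTop 2)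
    refine tendsto_of_tendsto_of_tendsto_of_le_of_le' tendsto_const_nhds bound_lim
      (.of_forall fun _ => zero_le) ?_
    filter_upwards [eventually_gt_atTop 0] with t ht using hγ.measure_sqBessel_lt_one_le ht
  have pos : ∀ᵐ ω ∂P, ∀ q : ℚ, 0 < q → 0 < sqBessel γ q ω := by
    refine ae_all_iff.2 fun q => ?_
    by_cases hq : 0 < q
    · filter_upwards [hγ.ae_sqBessel_pos (Rat.cast_pos.2 hq)] with ω hω _ using hω
    · exact ae_of_all _ fun ω h => absurd h hq
  filter_upwards [pos, ae_tendsto_clock_atTop hγ.measurable_uncurry_sqBessel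
    hγ.continuous_sqBessel sqBessel_nonneg small] with ω hpos hlim
  exact ⟨hγ.continuous_sqBessel ω, fun t => sqBessel_nonneg t ω,
    strictMonoOn_clock (hγ.continuous_sqBessel ω) (fun t => sqBessel_nonneg t ω) hpos, hlim⟩

end IsStdBMVec

/-! ### The Dambis–Dubins–Schwarz process -/

/-- The Dambis–Dubins–Schwarz transform of `(‖γ t‖² - d t) / 2`, set to `0` off the event `G`.
It is used for events `G` on which the paths of `‖γ‖²` are clock rates. -/
noncomputable def ddsMotion {Ω : Type*} {d : ℕ} (γ : ℝ → Ω → EuclideanSpace ℝ (Fin d))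
    (G : Set Ω) (r : ℝ) (ω : Ω) : ℝ :=
  G.indicator (fun ω => sqBesselMartingale γ (timeChange (fun t => sqBessel γ t ω) r) ω) ω

theorem ddsMotion_clock {Ω : Type*} {d : ℕ} {γ : ℝ → Ω → EuclideanSpace ℝ (Fin d)} {G : Set Ω}
    {ω : Ω} (hω : ω ∈ G) (rate : IsClockRate fun t => sqBessel γ t ω)
    {t : ℝ} (ht : 0 ≤ t) :
    ddsMotion γ G (clock (fun s => sqBessel γ s ω) t) ω = sqBesselMartingale γ t ω := by
  rw [ddsMotion, indicator_of_mem hω, rate.timeChange_clock ht]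

namespace IsStdBMVec

variable {Ω : Type*} [MeasurableSpace Ω] {P : Measure Ω} {d : ℕ}
  {γ : ℝ → Ω → EuclideanSpace ℝ (Fin d)} {G : Set Ω}

theorem continuous_sqBesselMartingale (hγ : IsStdBMVec d P γ) (ω : Ω) :
    Continuous fun t => sqBesselMartingale γ t ω :=
  ((hγ.continuous_sqBessel ω).sub (continuous_const.mul continuous_id)).div_const 2

theorem sqBesselMartingale_zero (hγ : IsStdBMVec d P γ) (ω : Ω) :
    sqBesselMartingale γ 0 ω = 0 := by
  simp [sqBesselMartingale, sqBessel, hγ.start]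

variable (hγ : IsStdBMVec d P γ) (rate : ∀ ω ∈ G, IsClockRate fun t => sqBessel γ t ω)
include hγ rate

theorem ddsMotion_zero (ω : Ω) : ddsMotion γ G 0 ω = 0 :=
  indicator_apply_eq_zero.2 fun hω => by
    rw [(rate ω hω).timeChange_of_nonpos le_rfl, hγ.sqBesselMartingale_zero]

theorem continuous_ddsMotion (ω : Ω) : Continuous fun r => ddsMotion γ G r ω := by
  by_cases hω : ω ∈ G
  · simp only [ddsMotion, indicator_of_mem hω]
    exact (hγ.continuous_sqBesselMartingale ω).comp (rate ω hω).continuous_timeChange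
  · simp only [ddsMotion, indicator_of_notMem hω, continuous_const]

theorem measurable_indicator_timeChange (hG : MeasurableSet G) (r : ℝ) :
    Measurable (G.indicator fun ω => timeChange (fun t => sqBessel γ t ω) r) :=
  measurable_of_Iic fun t => by
    let C : Ω → ℝ := G.indicator fun ω => timeChange (fun t => sqBessel γ t ω) r
    rcases lt_or_ge t 0 with ht | ht
    · have C_nonneg : ∀ ω, 0 ≤ C ω := indicator_nonneg fun ω _ => timeChange_nonneg _ r
      have : C ⁻¹' Iic t = ∅ := eq_empty_of_forall_notMem fun ω hω =>
        ((mem_Iic.1 hω).trans_lt ht).not_ge (C_nonneg ω)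
      exact this ▸ MeasurableSet.empty
    · have : C ⁻¹' Iic t = Gᶜ ∪ G ∩ {ω | r ≤ clock (fun s => sqBessel γ s ω) t} := by
        ext ω
        by_cases hω : ω ∈ G
        · have : C ω = timeChange (fun t => sqBessel γ t ω) r := indicator_of_mem hω _
          rw [mem_preimage, this, mem_Iic, (rate ω hω).timeChange_le_iff ht]
          simp [hω]
        · have : C ω = 0 := indicator_of_notMem hω _
          rw [mem_preimage, this, mem_Iic]
          simp [hω, ht]
      have clock_meas : Measurable fun ω => clock (fun s => sqBessel γ s ω) t :=
        measurable_clock hγ.measurable_uncurry_sqBessel ht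
      exact this ▸ hG.compl.union (hG.inter (measurableSet_le measurable_const clock_meas))

theorem measurable_ddsMotion (hG : MeasurableSet G) (r : ℝ) : Measurable (ddsMotion γ G r) := by
  have C_meas := hγ.measurable_indicator_timeChange rate hG r
  set C : Ω → ℝ := G.indicator fun ω => timeChange (fun t => sqBessel γ t ω) r with C_def
  have U_meas : Measurable fun ω => sqBessel γ (C ω) ω := by
    simpa only [Function.comp_def, Function.uncurry_apply_pair] using
      hγ.measurable_uncurry_sqBessel.comp (C_meas.prodMk measurable_id')
  have eq : ddsMotion γ G r = G.indicator fun ω => (sqBessel γ (C ω) ω - d * C ω) / 2 := by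
    funext ω
    by_cases hω : ω ∈ G
    · simp only [ddsMotion, sqBesselMartingale, C_def, indicator_of_mem hω]
    · simp only [ddsMotion, indicator_of_notMem hω]
  rw [eq]
  exact ((U_meas.sub (C_meas.const_mul _)).div_const 2).indicator hG

end IsStdBMVec

/-! ### Step functions along the Riemann sums of a clock -/

/-- The step function with value `l i` on `(t i, t (i + 1)]` and `0` elsewhere. -/
noncomputable def stepFunction {n : ℕ} (t : Fin (n + 1) → ℝ) (l : Fin n → ℝ) (x : ℝ) : ℝ :=
  ∑ i, (Ioc (t i.castSucc) (t i.succ)).indicator (fun _ => l i) x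

section StepFunction

variable {n : ℕ} {t : Fin (n + 1) → ℝ} {l : Fin n → ℝ}

theorem measurable_stepFunction : Measurable (stepFunction t l) :=
  Finset.measurable_fun_sum _ fun _ _ => measurable_const.indicator measurableSet_Ioc

theorem abs_stepFunction_le (x : ℝ) : |stepFunction t l x| ≤ ∑ i, |l i| :=
  (Finset.abs_sum_le_sum_abs _ _).trans
    (Finset.sum_le_sum fun _ _ => norm_indicator_le_norm_self (fun _ => l _) x)

theorem eq_of_mem_Ioc_of_mem_Ioc (ht : Monotone t) {x : ℝ} {i j : Fin n}
    (hi : x ∈ Ioc (t i.castSucc) (t i.succ)) (hj : x ∈ Ioc (t j.castSucc) (t j.succ)) : i = j := by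
  have separated {i j : Fin n} (hi : x ≤ t i.succ) (hj : t j.castSucc < x) : ¬ i < j :=
    fun hij => (hj.trans_le hi).not_ge (ht (Fin.succ_le_castSucc_iff.2 hij))
  exact le_antisymm (not_lt.1 (separated hj.2 hi.1)) (not_lt.1 (separated hi.2 hj.1))

theorem stepFunction_sq (ht : Monotone t) (x : ℝ) :
    stepFunction t l x ^ 2 = stepFunction t (fun i => l i ^ 2) x := by
  by_cases hx : ∃ i : Fin n, x ∈ Ioc (t i.castSucc) (t i.succ)
  · obtain ⟨i, hi⟩ := hx
    have eval (l : Fin n → ℝ) : stepFunction t l x = l i :=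
      (Finset.sum_eq_single i (fun j _ hji => indicator_of_notMem
        (fun hj => hji (eq_of_mem_Ioc_of_mem_Ioc ht hj hi)) _) (by simp)).trans
        (indicator_of_mem hi _)
    rw [eval, eval]
  · have eval (l : Fin n → ℝ) : stepFunction t l x = 0 :=
      Finset.sum_eq_zero fun i _ => indicator_of_notMem (fun hi => hx ⟨i, hi⟩) _
    rw [eval, eval, zero_pow two_ne_zero]

theorem sum_stepFunction_riemannSum_mul (ht : Monotone t) {h : ℝ} (hh : 0 ≤ h) {u : ℝ → ℝ}
    (hu : ∀ s, 0 ≤ u s) (J : ℕ) (f : ℕ → ℝ) :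
    ∑ j ∈ Finset.range J, stepFunction t l (riemannSum h u (j + 1)) * (f (j + 1) - f j) =
      ∑ i, l i * (f (riemannInverse h u J (t i.succ)) -
        f (riemannInverse h u J (t i.castSucc))) := by
  classical
  simp_rw [stepFunction, Finset.sum_mul]
  rw [Finset.sum_comm]
  refine Finset.sum_congr rfl fun i _ => ?_
  have below (b : ℝ) := sum_ite_riemannSum_le (r := b) (J := J) hh hu f
  rw [← sub_sub_sub_cancel_right _ _ (f 0), ← below, ← below, ← Finset.sum_sub_distrib,
    Finset.mul_sum]
  refine Finset.sum_congr rfl fun j _ => ?_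
  have hi : t i.castSucc ≤ t i.succ := ht (Fin.castSucc_le_succ i)
  rcases le_or_gt (riemannSum h u (j + 1)) (t i.castSucc) with h1 | h1
  · simp [h1, h1.trans hi]
  · rcases le_or_gt (riemannSum h u (j + 1)) (t i.succ) with h2 | h2
    · simp [h1, h2, h1.not_ge]
    · simp [h1, h2.not_ge]

end StepFunction

/-- The grid of mesh `h` on the half-line. -/
def uniformGrid (h : ℝ) (j : ℕ) : ℝ := j * h

theorem uniformGrid_nonneg {h : ℝ} (hh : 0 ≤ h) (j : ℕ) : 0 ≤ uniformGrid h j :=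
  mul_nonneg j.cast_nonneg hh

theorem monotone_uniformGrid {h : ℝ} (hh : 0 ≤ h) : Monotone (uniformGrid h) := fun _ _ hij =>
  mul_le_mul_of_nonneg_right (Nat.cast_le.2 hij) hh

theorem uniformGrid_succ_sub (h : ℝ) (j : ℕ) : uniformGrid h (j + 1) - uniformGrid h j = h := by
  rw [uniformGrid, uniformGrid, Nat.cast_succ]
  ring

/-- The value of `stepFunction t l` at the Riemann sum of `‖γ‖²` up to the end of the `j`-th mesh
interval, as an integrand on that interval. It is predictable because left Riemann sums look only
at the left end point. -/
noncomputable def clockWeight {Ω E : Type*} [Norm E] (γ : ℝ → Ω → E) (h : ℝ) {n : ℕ}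
    (t : Fin (n + 1) → ℝ) (l : Fin n → ℝ) (j : ℕ) (ω : Ω) : ℝ :=
  stepFunction t l (riemannSum h (fun s => sqBessel γ s ω) (j + 1))

section ClockWeight

variable {Ω : Type*} {d : ℕ} {γ : ℝ → Ω → EuclideanSpace ℝ (Fin d)} {n : ℕ}
  {t : Fin (n + 1) → ℝ} {l : Fin n → ℝ} {h : ℝ}

theorem measurable_past_clockWeight (hh : 0 ≤ h) (j : ℕ) :
    Measurable[past γ (uniformGrid h j)] (clockWeight γ h t l j) := by
  refine measurable_stepFunction.comp (Finset.measurable_fun_sum _ fun i hi => ?_)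
  exact (measurable_sqBessel_past (uniformGrid_nonneg hh i)
    (monotone_uniformGrid hh (Nat.lt_succ_iff.1 (Finset.mem_range.1 hi)))).const_mul h

theorem bracketSum_clockWeight (ht : Monotone t) (hh : 0 ≤ h) (J : ℕ) (ω : Ω) :
    bracketSum γ (uniformGrid h) (clockWeight γ h t l) J ω =
      ∑ i, l i ^ 2 *
        (riemannSum h (fun s => sqBessel γ s ω)
            (riemannInverse h (fun s => sqBessel γ s ω) J (t i.succ)) -
          riemannSum h (fun s => sqBessel γ s ω)
            (riemannInverse h (fun s => sqBessel γ s ω) J (t i.castSucc))) := by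
  rw [← sum_stepFunction_riemannSum_mul ht hh fun s => sqBessel_nonneg s ω]
  refine Finset.sum_congr rfl fun j _ => ?_
  rw [clockWeight, stepFunction_sq ht, uniformGrid_succ_sub, riemannSum_succ _ _ j,
    add_sub_cancel_left, uniformGrid]

theorem bracketSum_clockWeight_le (ht : Monotone t) (ht₀ : ∀ i, 0 ≤ t i) (hh : 0 ≤ h) (J : ℕ)
    (ω : Ω) : bracketSum γ (uniformGrid h) (clockWeight γ h t l) J ω ≤
      ∑ i, l i ^ 2 * t i.succ := by
  have hu (s : ℝ) : 0 ≤ sqBessel γ s ω := sqBessel_nonneg s ω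
  rw [bracketSum_clockWeight ht hh]
  refine Finset.sum_le_sum fun i _ => mul_le_mul_of_nonneg_left ?_ (sq_nonneg _)
  refine (sub_le_self _ (Finset.sum_nonneg fun j _ => mul_nonneg hh (hu _))).trans ?_
  exact (le_riemannInverse_iff hh hu (ht₀ _) riemannInverse_le).1 le_rfl

theorem innerSum_add_errorSum_clockWeight (ht : Monotone t) (hh : 0 ≤ h) (J : ℕ) (ω : Ω) :
    innerSum γ (uniformGrid h) (clockWeight γ h t l) J ω +
        errorSum γ (uniformGrid h) (clockWeight γ h t l) J ω =
      ∑ i, l i *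
        (sqBesselMartingale γ
            (riemannInverse h (fun s => sqBessel γ s ω) J (t i.succ) * h) ω -
          sqBesselMartingale γ
            (riemannInverse h (fun s => sqBessel γ s ω) J (t i.castSucc) * h) ω) := by
  rw [← sum_mul_sqBesselMartingale_sub]
  exact sum_stepFunction_riemannSum_mul ht hh (fun s => sqBessel_nonneg s ω) J
    fun j => sqBesselMartingale γ (j * h) ω

variable {mesh : ℕ → ℝ} (mesh_pos : ∀ k, 0 < mesh k) (mesh_lim : Tendsto mesh atTop (𝓝 0))
  {J : ℕ → ℕ} (hJ : Tendsto (fun k => J k * mesh k) atTop atTop)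
include mesh_pos mesh_lim hJ

theorem tendsto_bracketSum_clockWeight {ω : Ω} (rate : IsClockRate fun s => sqBessel γ s ω)
    (ht : Monotone t) (ht₀ : ∀ i, 0 ≤ t i) :
    Tendsto (fun k => bracketSum γ (uniformGrid (mesh k)) (clockWeight γ (mesh k) t l) (J k) ω)
      atTop (𝓝 (∑ i, l i ^ 2 * (t i.succ - t i.castSucc))) := by
  simp_rw [fun k => bracketSum_clockWeight (γ := γ) (l := l) ht (mesh_pos k).le (J k) ω]
  have level {r : ℝ} (hr : 0 ≤ r) : Tendsto (fun k => riemannSum (mesh k)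
      (fun s => sqBessel γ s ω) (riemannInverse (mesh k) (fun s => sqBessel γ s ω) (J k) r))
      atTop (𝓝 r) := by
    have := tendsto_riemannSum rate.continuous mesh_pos mesh_lim
      (rate.tendsto_riemannInverse_mul hr mesh_pos mesh_lim hJ)
    rwa [← clock, rate.clock_timeChange, max_eq_left hr] at this
  exact tendsto_finsetSum _ fun i _ => ((level (ht₀ _)).sub (level (ht₀ _))).const_mul _

theorem tendsto_innerSum_add_errorSum_clockWeight [MeasurableSpace Ω] {P : Measure Ω}
    (hγ : IsStdBMVec d P γ) {G : Set Ω} {ω : Ω} (hω : ω ∈ G)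
    (rate : IsClockRate fun s => sqBessel γ s ω) (ht : Monotone t) (ht₀ : ∀ i, 0 ≤ t i) :
    Tendsto (fun k => innerSum γ (uniformGrid (mesh k)) (clockWeight γ (mesh k) t l) (J k) ω +
        errorSum γ (uniformGrid (mesh k)) (clockWeight γ (mesh k) t l) (J k) ω)
      atTop (𝓝 (∑ i, l i * (ddsMotion γ G (t i.succ) ω - ddsMotion γ G (t i.castSucc) ω))) := by
  simp_rw [fun k => innerSum_add_errorSum_clockWeight (γ := γ) (l := l) ht (mesh_pos k).le (J k) ω]
  have value {r : ℝ} (hr : 0 ≤ r) : Tendsto (fun k => sqBesselMartingale γ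
      (riemannInverse (mesh k) (fun s => sqBessel γ s ω) (J k) r * mesh k) ω)
      atTop (𝓝 (ddsMotion γ G r ω)) := by
    rw [ddsMotion, indicator_of_mem hω]
    exact ((hγ.continuous_sqBesselMartingale ω).tendsto _).comp
      (rate.tendsto_riemannInverse_mul hr mesh_pos mesh_lim hJ)
  exact tendsto_finsetSum _ fun i _ => ((value (ht₀ _)).sub (value (ht₀ _))).const_mul _

end ClockWeight

/-! ### The characteristic function of the time-changed martingale -/

theorem integral_abs_le_sqrt_integral_sq {Ω : Type*} [MeasurableSpace Ω] {P : Measure Ω}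
    [IsProbabilityMeasure P] {f : Ω → ℝ} (hf : MemLp f 2 P) :
    ∫ ω, |f ω| ∂P ≤ √(∫ ω, f ω ^ 2 ∂P) := by
  have var_nonneg := variance_nonneg |f| P
  rw [variance_eq_sub hf.abs] at var_nonneg
  simp only [Pi.pow_apply, Pi.abs_apply, sq_abs] at var_nonneg
  exact Real.le_sqrt_of_sq_le (by linarith)

section ExpPhase

theorem norm_expPhase_add_sub_le (v x y : ℝ) :
    ‖expPhase v (x + y) - expPhase v x‖ ≤ Real.exp (v / 2) * |y| := by
  have factor : expPhase v (x + y) - expPhase v x =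
      expPhase v x * (Complex.exp (Complex.I * y) - 1) := by
    rw [expPhase_add_right, mul_sub, mul_one, mul_comm (y : ℂ)]
  rw [factor, norm_mul, norm_expPhase]
  exact mul_le_mul_of_nonneg_left Real.norm_exp_I_mul_ofReal_sub_one_le (Real.exp_pos _).le

variable {Ω : Type*} [MeasurableSpace Ω] {P : Measure Ω} [IsProbabilityMeasure P] {V X Y : Ω → ℝ}
  {C : ℝ}

theorem norm_integral_expPhase_add_sub_le (hV : Measurable V) (hX : Measurable X)
    (hY : Measurable Y) (hY₂ : MemLp Y 2 P) (hC : ∀ ω, V ω ≤ C) :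
    ‖∫ ω, expPhase (V ω) (X ω + Y ω) ∂P - ∫ ω, expPhase (V ω) (X ω) ∂P‖ ≤
      Real.exp (C / 2) * √(∫ ω, Y ω ^ 2 ∂P) := by
  have sum_int : Integrable (fun ω => expPhase (V ω) (X ω + Y ω)) P :=
    integrable_expPhase hV (hX.add hY) hC
  have single_int := integrable_expPhase (P := P) hV hX hC
  calc ‖∫ ω, expPhase (V ω) (X ω + Y ω) ∂P - ∫ ω, expPhase (V ω) (X ω) ∂P‖
      = ‖∫ ω, (expPhase (V ω) (X ω + Y ω) - expPhase (V ω) (X ω)) ∂P‖ := by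
        rw [← integral_sub sum_int single_int]
    _ ≤ ∫ ω, ‖expPhase (V ω) (X ω + Y ω) - expPhase (V ω) (X ω)‖ ∂P :=
        norm_integral_le_integral_norm _
    _ ≤ ∫ ω, Real.exp (C / 2) * |Y ω| ∂P := by
        refine integral_mono (sum_int.sub single_int).norm
          ((hY₂.integrable one_le_two).abs.const_mul _) fun ω => ?_
        refine (norm_expPhase_add_sub_le _ _ _).trans ?_
        exact mul_le_mul_of_nonneg_right
          (Real.exp_le_exp.2 (div_le_div_of_nonneg_right (hC ω) two_pos.le)) (abs_nonneg _)
    _ ≤ Real.exp (C / 2) * √(∫ ω, Y ω ^ 2 ∂P) := by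
        rw [integral_const_mul]
        exact mul_le_mul_of_nonneg_left (integral_abs_le_sqrt_integral_sq hY₂) (Real.exp_pos _).le

end ExpPhase

/-- A sequence of mesh sizes, used with `meshCount` steps. -/
noncomputable def meshSize (k : ℕ) : ℝ := ((k : ℝ) + 1)⁻¹ ^ 2

/-- A number of steps of size `meshSize` for which the covered time diverges but the accumulated
squared mesh vanishes. -/
def meshCount (k : ℕ) : ℕ := (k + 1) ^ 3

theorem meshSize_pos (k : ℕ) : 0 < meshSize k := by
  unfold meshSize
  positivity

theorem meshSize_le_one (k : ℕ) : meshSize k ≤ 1 :=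
  pow_le_one₀ (by positivity) (inv_le_one_of_one_le₀ (le_add_of_nonneg_left k.cast_nonneg))

theorem tendsto_meshSize : Tendsto meshSize atTop (𝓝 0) := by
  have := (tendsto_one_div_add_atTop_nhds_zero_nat (𝕜 := ℝ)).pow 2
  rw [zero_pow two_ne_zero] at this
  exact this.congr fun k => by rw [meshSize, one_div]

theorem meshCount_mul_meshSize (k : ℕ) : meshCount k * meshSize k = k + 1 := by
  unfold meshCount meshSize
  push_cast
  field_simp

theorem tendsto_meshCount_mul_meshSize :
    Tendsto (fun k => meshCount k * meshSize k) atTop atTop := by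
  simp_rw [meshCount_mul_meshSize]
  exact tendsto_atTop_add_const_right _ _ tendsto_natCast_atTop_atTop

theorem tendsto_meshCount_mul_meshSize_sq :
    Tendsto (fun k => meshCount k * meshSize k ^ 2) atTop (𝓝 0) := by
  refine tendsto_one_div_add_atTop_nhds_zero_nat.congr fun k => ?_
  rw [pow_two, ← mul_assoc, meshCount_mul_meshSize, meshSize]
  field_simp

namespace IsStdBMVec

variable {Ω : Type*} [MeasurableSpace Ω] {P : Measure Ω} {d : ℕ}
  {γ : ℝ → Ω → EuclideanSpace ℝ (Fin d)} {n : ℕ} {t : Fin (n + 1) → ℝ}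

theorem measurable_bracketSum_clockWeight (hγ : IsStdBMVec d P γ) (l : Fin n → ℝ) {h : ℝ}
    (hh : 0 ≤ h) (J : ℕ) :
    Measurable (bracketSum γ (uniformGrid h) (clockWeight γ h t l) J) :=
  hγ.measurable_of_past (measurable_past_bracketSum (uniformGrid_nonneg hh)
    (measurable_past_clockWeight hh) fun _ hj => monotone_uniformGrid hh hj.le)

theorem measurable_innerSum_clockWeight (hγ : IsStdBMVec d P γ) (l : Fin n → ℝ) {h : ℝ}
    (hh : 0 ≤ h) (J : ℕ) :
    Measurable (innerSum γ (uniformGrid h) (clockWeight γ h t l) J) :=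
  hγ.measurable_of_past (measurable_past_innerSum (uniformGrid_nonneg hh)
    (monotone_uniformGrid hh) (measurable_past_clockWeight hh) J)

theorem measurable_errorSum_clockWeight (hγ : IsStdBMVec d P γ) (l : Fin n → ℝ) {h : ℝ}
    (hh : 0 ≤ h) (J : ℕ) :
    Measurable (errorSum γ (uniformGrid h) (clockWeight γ h t l) J) :=
  hγ.measurable_of_past (measurable_past_errorSum (uniformGrid_nonneg hh)
    (monotone_uniformGrid hh) (measurable_past_clockWeight hh) J)

variable [IsProbabilityMeasure P]

theorem integral_expPhase_clockWeight (hγ : IsStdBMVec d P γ) (ht : Monotone t)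
    (ht₀ : ∀ i, 0 ≤ t i) (l : Fin n → ℝ) {h : ℝ} (hh : 0 ≤ h) (J : ℕ) :
    ∫ ω, expPhase (bracketSum γ (uniformGrid h) (clockWeight γ h t l) J ω)
      (innerSum γ (uniformGrid h) (clockWeight γ h t l) J ω) ∂P = 1 :=
  hγ.integral_expPhase_bracketSum_innerSum (uniformGrid_nonneg hh) (monotone_uniformGrid hh)
    (measurable_past_clockWeight hh) (bracketSum_clockWeight_le ht ht₀ hh) J

theorem norm_integral_expPhase_clockWeight_sub_one_le (hγ : IsStdBMVec d P γ) (ht : Monotone t)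
    (ht₀ : ∀ i, 0 ≤ t i) (l : Fin n → ℝ) {h : ℝ} (hh : 0 ≤ h) (J : ℕ) :
    ‖∫ ω, expPhase (bracketSum γ (uniformGrid h) (clockWeight γ h t l) J ω)
        (innerSum γ (uniformGrid h) (clockWeight γ h t l) J ω +
          errorSum γ (uniformGrid h) (clockWeight γ h t l) J ω) ∂P - 1‖ ≤
      Real.exp ((∑ i, l i ^ 2 * t i.succ) / 2) *
        √((∑ i, |l i|) ^ 2 * (d ^ 2 * gaussianFourthMoment) * (J * h ^ 2)) := by
  have grid_nonneg := uniformGrid_nonneg hh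
  have grid_mono := monotone_uniformGrid hh
  have weight_meas := measurable_past_clockWeight (γ := γ) (t := t) (l := l) hh
  have weight_le (j : ℕ) (ω : Ω) : |clockWeight γ h t l j ω| ≤ ∑ i, |l i| := abs_stepFunction_le _
  have error_moments := hγ.hasAllMoments_errorSum grid_nonneg grid_mono
    (fun j => .of_bound (hγ.measurable_of_past (weight_meas j)) (weight_le j)) J
  have error_le := hγ.integral_errorSum_sq_le grid_nonneg grid_mono weight_meas weight_le J
  simp only [uniformGrid_succ_sub, Finset.sum_const, Finset.card_range, nsmul_eq_mul] at error_le
  rw [← hγ.integral_expPhase_clockWeight ht ht₀ l hh J]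
  refine (norm_integral_expPhase_add_sub_le
    (hγ.measurable_of_past
      (measurable_past_bracketSum grid_nonneg weight_meas fun j hj => grid_mono hj.le))
    (hγ.measurable_of_past (measurable_past_innerSum grid_nonneg grid_mono weight_meas J))
    (hγ.measurable_of_past (measurable_past_errorSum grid_nonneg grid_mono weight_meas J))
    (error_moments 2) (bracketSum_clockWeight_le ht ht₀ hh J)).trans ?_
  exact mul_le_mul_of_nonneg_left (Real.sqrt_le_sqrt error_le) (Real.exp_pos _).le

variable {G : Set Ω}

theorem integral_expPhase_ddsMotion (hγ : IsStdBMVec d P γ) (hG : ∀ᵐ ω ∂P, ω ∈ G)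
    (rate : ∀ ω ∈ G, IsClockRate fun t => sqBessel γ t ω) (ht : Monotone t)
    (ht₀ : ∀ i, 0 ≤ t i) (l : Fin n → ℝ) :
    ∫ ω, expPhase (∑ i, l i ^ 2 * (t i.succ - t i.castSucc))
      (∑ i, l i * (ddsMotion γ G (t i.succ) ω - ddsMotion γ G (t i.castSucc) ω)) ∂P = 1 := by
  let V (k : ℕ) : Ω → ℝ :=
    bracketSum γ (uniformGrid (meshSize k)) (clockWeight γ (meshSize k) t l) (meshCount k)
  let X (k : ℕ) (ω : Ω) : ℝ :=
    innerSum γ (uniformGrid (meshSize k)) (clockWeight γ (meshSize k) t l) (meshCount k) ω +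
      errorSum γ (uniformGrid (meshSize k)) (clockWeight γ (meshSize k) t l) (meshCount k) ω
  have mesh_nonneg (k : ℕ) : 0 ≤ meshSize k := (meshSize_pos k).le
  have hV (k : ℕ) : Measurable (V k) :=
    hγ.measurable_bracketSum_clockWeight l (mesh_nonneg k) _
  have hX (k : ℕ) : Measurable (X k) :=
    (hγ.measurable_innerSum_clockWeight l (mesh_nonneg k) _).add
      (hγ.measurable_errorSum_clockWeight l (mesh_nonneg k) _)
  have lim_one : Tendsto (fun k => ∫ ω, expPhase (V k ω) (X k ω) ∂P) atTop (𝓝 1) := by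
    rw [tendsto_iff_norm_sub_tendsto_zero]
    refine squeeze_zero (fun _ => norm_nonneg _) (fun k =>
      hγ.norm_integral_expPhase_clockWeight_sub_one_le ht ht₀ l (mesh_nonneg k) _) ?_
    have := ((tendsto_meshCount_mul_meshSize_sq.const_mul
      ((∑ i, |l i|) ^ 2 * (d ^ 2 * gaussianFourthMoment))).sqrt).const_mul
      (Real.exp ((∑ i, l i ^ 2 * t i.succ) / 2))
    simpa only [mul_zero, Real.sqrt_zero] using this
  refine tendsto_nhds_unique (tendsto_integral_of_dominated_convergence
    (fun _ => Real.exp ((∑ i, l i ^ 2 * t i.succ) / 2))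
    (fun k => (measurable_expPhase (hV k) (hX k)).aestronglyMeasurable) (integrable_const _)
    (fun k => ae_of_all _ fun ω => ?_) ?_) lim_one
  · rw [norm_expPhase]
    exact Real.exp_le_exp.2 (div_le_div_of_nonneg_right
      (bracketSum_clockWeight_le ht ht₀ (mesh_nonneg k) _ ω) two_pos.le)
  · filter_upwards [hG] with ω hω
    exact tendsto_expPhase
      (tendsto_bracketSum_clockWeight meshSize_pos tendsto_meshSize
        tendsto_meshCount_mul_meshSize (rate ω hω) ht ht₀)
      (tendsto_innerSum_add_errorSum_clockWeight meshSize_pos tendsto_meshSize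
        tendsto_meshCount_mul_meshSize hγ hω (rate ω hω) ht ht₀)

theorem integral_cexp_ddsMotion (hγ : IsStdBMVec d P γ) (hG : ∀ᵐ ω ∂P, ω ∈ G)
    (rate : ∀ ω ∈ G, IsClockRate fun t => sqBessel γ t ω) (ht : Monotone t)
    (ht₀ : ∀ i, 0 ≤ t i) (l : Fin n → ℝ) :
    ∫ ω, Complex.exp ((∑ i, l i * (ddsMotion γ G (t i.succ) ω - ddsMotion γ G (t i.castSucc) ω) :
        ℝ) * Complex.I) ∂P =
      ∏ i, charFun (gaussianReal 0 (t i.succ - t i.castSucc).toNNReal) (l i) := by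
  have := hγ.integral_expPhase_ddsMotion hG rate ht ht₀ l
  simp_rw [expPhase] at this
  rw [integral_const_mul] at this
  have factor (i : Fin n) : charFun (gaussianReal 0 (t i.succ - t i.castSucc).toNNReal) (l i) =
      Complex.exp (-(l i ^ 2 * (t i.succ - t i.castSucc) / 2 : ℝ)) := by
    rw [charFun_gaussianReal, Real.coe_toNNReal _ (sub_nonneg.2 (ht (Fin.castSucc_le_succ i)))]
    congr 1
    push_cast
    ring
  simp_rw [factor]
  rw [← Complex.exp_sum, Finset.sum_neg_distrib, Complex.exp_neg, ← Complex.ofReal_sum,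
    ← Finset.sum_div, ← Complex.ofReal_exp]
  exact eq_inv_of_mul_eq_one_right this

theorem charFun_map_ddsMotion_sub (hγ : IsStdBMVec d P γ) (hG : MeasurableSet G)
    (hG_ae : ∀ᵐ ω ∂P, ω ∈ G) (rate : ∀ ω ∈ G, IsClockRate fun t => sqBessel γ t ω) {s t : ℝ}
    (hs : 0 ≤ s) (hst : s ≤ t) :
    charFun (P.map fun ω => ddsMotion γ G t ω - ddsMotion γ G s ω) =
      charFun (gaussianReal 0 (t - s).toNNReal) := by
  have increment_measurable : Measurable fun ω => ddsMotion γ G t ω - ddsMotion γ G s ω :=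
    (hγ.measurable_ddsMotion rate hG t).sub (hγ.measurable_ddsMotion rate hG s)
  ext l
  rw [charFun_apply_real, integral_map increment_measurable.aemeasurable (by fun_prop)]
  have pair_mono : Monotone ![s, t] := by
    intro i j hij
    fin_cases i <;> fin_cases j <;> simp_all
  have pair_nonneg : ∀ i, 0 ≤ ![s, t] i := by
    intro i
    fin_cases i
    exacts [hs, hs.trans hst]
  have := hγ.integral_cexp_ddsMotion (n := 1) hG_ae rate pair_mono pair_nonneg fun _ => l
  simp only [Fin.sum_univ_one, Fin.prod_univ_one] at this
  simpa using this

theorem isStdBM_ddsMotion (hγ : IsStdBMVec d P γ) (hG : MeasurableSet G)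
    (hG_ae : ∀ᵐ ω ∂P, ω ∈ G) (rate : ∀ ω ∈ G, IsClockRate fun t => sqBessel γ t ω) :
    IsStdBM P (ddsMotion γ G) where
  measurable := hγ.measurable_ddsMotion rate hG
  start := hγ.ddsMotion_zero rate
  cont := hγ.continuous_ddsMotion rate
  indep n t ht₀ ht := by
    let increment (i : Fin n) (ω : Ω) : ℝ :=
      ddsMotion γ G (t i.succ) ω - ddsMotion γ G (t i.castSucc) ω
    have hm (i : Fin n) : Measurable (increment i) :=
      (hγ.measurable_ddsMotion rate hG _).sub (hγ.measurable_ddsMotion rate hG _)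
    have hm' : Measurable fun ω => WithLp.toLp 2 fun i => increment i ω :=
      (WithLp.measurable_toLp 2 (Fin n → ℝ)).comp (measurable_pi_lambda _ hm)
    refine (iIndepFun_iff_charFun_pi fun i => (hm i).aemeasurable).2 fun l => ?_
    rw [charFun_apply, integral_map hm'.aemeasurable (by fun_prop)]
    refine (hγ.integral_cexp_ddsMotion hG_ae rate ht ht₀ fun i => l i).trans ?_
    exact Finset.prod_congr rfl fun i _ => congrFun
      (hγ.charFun_map_ddsMotion_sub hG hG_ae rate (ht₀ _) (ht (Fin.castSucc_le_succ i))).symm _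
  gauss s t hs hst := by
    have hm : Measurable fun ω => ddsMotion γ G t ω - ddsMotion γ G s ω :=
      (hγ.measurable_ddsMotion rate hG t).sub (hγ.measurable_ddsMotion rate hG s)
    have := Measure.isProbabilityMeasure_map (μ := P) hm.aemeasurable
    exact Measure.ext_of_charFun (hγ.charFun_map_ddsMotion_sub hG hG_ae rate hs hst)

end IsStdBMVec

/-! ### Absence of drawdown -/

theorem measurableSet_forall_lt_of_continuous {Ω K : Type*} [MeasurableSpace Ω]
    [TopologicalSpace K] [CompactSpace K] [TopologicalSpace.SeparableSpace K] {F : Ω → K → ℝ}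
    (hF : ∀ ω, Continuous (F ω)) (hF_meas : ∀ x, Measurable fun ω => F ω x) (c : ℝ) :
    MeasurableSet {ω | ∀ x, F ω x < c} := by
  obtain ⟨D, D_countable, D_dense⟩ := TopologicalSpace.exists_countable_dense K
  have eq_iUnion : {ω | ∀ x, F ω x < c} =
      ⋃ n : ℕ, ⋂ x ∈ D, {ω | F ω x ≤ c - 1 / ((n : ℝ) + 1)} := by
    ext ω
    simp only [mem_ofPred_eq, mem_iUnion, mem_iInter]
    refine ⟨fun below => ?_, fun ⟨n, hn⟩ x => ?_⟩
    · rcases isEmpty_or_nonempty K with _ | _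
      · exact ⟨0, fun x => isEmptyElim x⟩
      · obtain ⟨x₀, -, max⟩ := isCompact_univ.exists_isMaxOn univ_nonempty (hF ω).continuousOn
        obtain ⟨n, hn⟩ := exists_nat_one_div_lt (sub_pos.2 (below x₀))
        exact ⟨n, fun x _ => by linarith [isMaxOn_iff.1 max x (mem_univ x)]⟩
    · have : F ω x ≤ c - 1 / ((n : ℝ) + 1) :=
        (isClosed_le (hF ω) continuous_const).closure_subset_iff.2 hn (D_dense x)
      linarith [Nat.one_div_pos_of_nat (α := ℝ) (n := n)]
  rw [eq_iUnion]
  exact .iUnion fun n => .biInter D_countable fun x _ =>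
    measurableSet_le (hF_meas x) measurable_const

/-- The path `u` never drops by `lam` or more from an earlier value during `[0, t]`. -/
def NoDrawdown (lam : ℝ) (u : ℝ → ℝ) (t : ℝ) : Prop :=
  ∀ a b, 0 ≤ a → a ≤ b → b ≤ t → u a - u b < lam

theorem NoDrawdown.mono {lam : ℝ} {u : ℝ → ℝ} {s t : ℝ} (hst : s ≤ t)
    (ht : NoDrawdown lam u t) : NoDrawdown lam u s :=
  fun a b ha hab hb => ht a b ha hab (hb.trans hst)

section DrawdownTime

variable {Ω : Type*} {X : ℝ → Ω → ℝ} {ω : Ω} {lam t : ℝ}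

theorem ddTime_nonneg : 0 ≤ ddTime lam X ω :=
  Real.sInf_nonneg fun _ ht => ht.1

theorem le_runMax (hX : Continuous fun s => X s ω) {a b : ℝ} (ha : 0 ≤ a) (hab : a ≤ b) :
    X a ω ≤ runMax X b ω := by
  refine le_ciSup (f := fun s : Icc (0 : ℝ) b => X s ω) ?_ ⟨a, ha, hab⟩
  rw [range_comp' (fun s => X s ω), Subtype.range_coe]
  exact isCompact_Icc.bddAbove_image hX.continuousOn

theorem exists_runMax_le (hX : Continuous fun s => X s ω) (ht : 0 ≤ t) :
    ∃ a ∈ Icc 0 t, runMax X t ω ≤ X a ω := by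
  obtain ⟨a, ha, max⟩ := isCompact_Icc.exists_isMaxOn (nonempty_Icc.2 ht) hX.continuousOn
  have : Nonempty (Icc 0 t) := ⟨⟨a, ha⟩⟩
  exact ⟨a, ha, ciSup_le fun s => max s.2⟩

theorem noDrawdown_of_lt_ddTime (hX : Continuous fun s => X s ω) (ht : t < ddTime lam X ω) :
    NoDrawdown lam (fun s => X s ω) t := by
  intro a b ha hab hbt
  by_contra! drop
  have : ddTime lam X ω ≤ b := csInf_le ⟨0, fun s hs => hs.1⟩
    ⟨ha.trans hab, by linarith [le_runMax hX ha hab]⟩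
  linarith

theorem le_ddTime_of_noDrawdown (hX : Continuous fun s => X s ω)
    (ht : NoDrawdown lam (fun s => X s ω) t) {T : ℝ}
    (hT : ¬NoDrawdown lam (fun s => X s ω) T) : t ≤ ddTime lam X ω := by
  refine le_csInf ?_ fun b ⟨hb, drop⟩ => ?_
  · simp only [NoDrawdown] at hT
    push Not at hT
    obtain ⟨a, b, ha, hab, -, drop⟩ := hT
    exact ⟨b, ha.trans hab, by linarith [le_runMax hX ha hab]⟩
  · by_contra! hbt
    obtain ⟨a, ha, max⟩ := exists_runMax_le hX hb
    linarith [ht a b ha.1 ha.2 hbt.le]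

end DrawdownTime

/-- The event that the squared Bessel process of `γ` has no drawdown of size `lam` up to time
`t`. -/
def noDrawdownEvent {Ω : Type*} {d : ℕ} (lam : ℝ) (γ : ℝ → Ω → EuclideanSpace ℝ (Fin d))
    (t : ℝ) : Set Ω :=
  {ω | NoDrawdown lam (fun s => sqBessel γ s ω) t}

theorem antitone_noDrawdownEvent {Ω : Type*} {d : ℕ} {lam : ℝ}
    {γ : ℝ → Ω → EuclideanSpace ℝ (Fin d)} : Antitone (noDrawdownEvent lam γ) :=
  fun _ _ hst _ hω => NoDrawdown.mono hst hω

namespace IsStdBMVec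

variable {Ω : Type*} [MeasurableSpace Ω] {P : Measure Ω} {d : ℕ}
  {γ : ℝ → Ω → EuclideanSpace ℝ (Fin d)} {s t lam : ℝ}

theorem measurableSet_past_noDrawdownEvent (hγ : IsStdBMVec d P γ) :
    MeasurableSet[past γ t] (noDrawdownEvent lam γ t) := by
  let triangle : Set (ℝ × ℝ) := {p | 0 ≤ p.1 ∧ p.1 ≤ p.2 ∧ p.2 ≤ t}
  have triangle_closed : IsClosed triangle := by
    refine (isClosed_le continuous_const continuous_fst).inter
      ((isClosed_le continuous_fst continuous_snd).inter
        (isClosed_le continuous_snd continuous_const))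
  have triangle_compact : IsCompact triangle :=
    (isCompact_Icc.prod isCompact_Icc : IsCompact (Icc 0 t ×ˢ Icc 0 t)).of_isClosed_subset
      triangle_closed fun p hp =>
        ⟨⟨hp.1, hp.2.1.trans hp.2.2⟩, hp.1.trans hp.2.1, hp.2.2⟩
  have : CompactSpace triangle := isCompact_iff_compactSpace.1 triangle_compact
  have eq_forall : noDrawdownEvent lam γ t =
      {ω | ∀ p : triangle, sqBessel γ p.1.1 ω - sqBessel γ p.1.2 ω < lam} := by
    ext ω
    exact ⟨fun h p => h _ _ p.2.1 p.2.2.1 p.2.2.2, fun h a b ha hab hb => h ⟨(a, b), ha, hab, hb⟩⟩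
  rw [eq_forall]
  refine @measurableSet_forall_lt_of_continuous Ω triangle (past γ t) _ _ _ _ (fun ω => ?_)
    (fun p => ?_) lam
  · exact ((hγ.continuous_sqBessel ω).comp (by fun_prop)).sub
      ((hγ.continuous_sqBessel ω).comp (by fun_prop))
  · exact (measurable_sqBessel_past p.2.1 (p.2.2.1.trans p.2.2.2)).sub
      (measurable_sqBessel_past (p.2.1.trans p.2.2.1) p.2.2.2)

theorem measurableSet_noDrawdownEvent (hγ : IsStdBMVec d P γ) :
    MeasurableSet (noDrawdownEvent lam γ t) :=
  past_le hγ.measurable t _ hγ.measurableSet_past_noDrawdownEvent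

end IsStdBMVec

/-! ### Exponential decay of the survival probability -/

theorem measure_inter_setOf_mem_of_indepFun {Ω 𝓧 𝓨 : Type*} [MeasurableSpace Ω]
    [MeasurableSpace 𝓧] [MeasurableSpace 𝓨] {P : Measure Ω} [IsProbabilityMeasure P] {E : Set Ω}
    {X : Ω → 𝓧} {Y : Ω → 𝓨} (hE : MeasurableSet E) (hX : Measurable X) (hY : Measurable Y)
    (indep : IndepFun (fun ω => (ω ∈ E, X ω)) Y P) {R : Set (𝓧 × 𝓨)} (hR : MeasurableSet R)
    {c : ℝ≥0∞} (hc : ∀ x, P {ω | (x, Y ω) ∈ R} = c) :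
    P (E ∩ {ω | (X ω, Y ω) ∈ R}) = c * P E := by
  have hZ : Measurable fun ω => (ω ∈ E, X ω) := (measurable_mem.2 hE).prodMk hX
  let S : Set ((Prop × 𝓧) × 𝓨) := {q | q.1.1 ∧ (q.1.2, q.2) ∈ R}
  have hS : MeasurableSet S :=
    measurable_fst.fst.setOf.inter ((measurable_fst.snd.prodMk measurable_snd) hR)
  have live_meas : MeasurableSet {z : Prop × 𝓧 | z.1} := measurable_fst.setOf
  calc P (E ∩ {ω | (X ω, Y ω) ∈ R}) = (P.map fun ω => ((ω ∈ E, X ω), Y ω)) S := by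
        rw [Measure.map_apply (hZ.prodMk hY) hS]
        rfl
    _ = ∫⁻ z, P.map Y (Prod.mk z ⁻¹' S) ∂P.map fun ω => (ω ∈ E, X ω) := by
        rw [(indepFun_iff_map_prod_eq_prod_map_map hZ.aemeasurable hY.aemeasurable).1 indep,
          Measure.prod_apply hS]
    _ = ∫⁻ z, {z : Prop × 𝓧 | z.1}.indicator (fun _ => c) z ∂P.map fun ω => (ω ∈ E, X ω) := by
        refine lintegral_congr fun z => ?_
        rw [Measure.map_apply hY (measurable_prodMk_left hS)]
        by_cases live : z.1
        · simp [S, live, ← hc z.2]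
        · simp [S, live]
    _ = c * P E := by
        rw [lintegral_indicator_const live_meas, Measure.map_apply hZ live_meas]
        rfl

/-- The pairs `(x, y)` for which every coordinate of `y`, measured in the direction of the sign of
the corresponding coordinate of `x`, lies in `S`. -/
def signedBox {d : ℕ} (S : Set ℝ) : Set (EuclideanSpace ℝ (Fin d) × EuclideanSpace ℝ (Fin d)) :=
  {p | ∀ i, (if 0 ≤ p.1 i then p.2 i else -p.2 i) ∈ S}

theorem measurableSet_signedBox {d : ℕ} {S : Set ℝ} (hS : MeasurableSet S) :
    MeasurableSet (signedBox S : Set (EuclideanSpace ℝ (Fin d) × EuclideanSpace ℝ (Fin d))) := by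
  rw [signedBox, ofPred_forall]
  refine .iInter fun i => ?_
  have signed_meas : Measurable fun p : EuclideanSpace ℝ (Fin d) × EuclideanSpace ℝ (Fin d) =>
      if 0 ≤ p.1 i then p.2 i else -p.2 i :=
    .ite (measurableSet_le measurable_const (by fun_prop)) (by fun_prop) (by fun_prop)
  exact signed_meas hS

theorem norm_add_of_mem_signedBox_Ioi {d : ℕ} {m : ℝ} {x y : EuclideanSpace ℝ (Fin d)}
    (h : (x, y) ∈ signedBox (Ioi m)) (i : Fin d) : m < |(x + y) i| := by
  have hi := h i
  simp only [mem_Ioi] at hi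
  rw [PiLp.add_apply]
  split_ifs at hi with hx
  · exact lt_abs.2 (.inl (by linarith))
  · exact lt_abs.2 (.inr (by linarith))

theorem le_norm_sq_sub_norm_add_sq {d : ℕ} [NeZero d] {m : ℝ} {x y : EuclideanSpace ℝ (Fin d)}
    (hm : 0 ≤ m) (hx : ∀ i, m + 1 < |x i|) (h : (x, y) ∈ signedBox (Ioo (-1) (-(1 / 2)))) :
    m ≤ ‖x‖ ^ 2 - ‖x + y‖ ^ 2 := by
  have coord_drop (i : Fin d) : m ≤ x i ^ 2 - (x + y) i ^ 2 := by
    have hi := h i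
    have large := hx i
    simp only at hi
    rw [PiLp.add_apply]
    split_ifs at hi with sign
    · rw [abs_of_nonneg sign] at large
      nlinarith [hi.1, hi.2]
    · rw [abs_of_neg (not_le.1 sign)] at large
      nlinarith [hi.1, hi.2]
  rw [EuclideanSpace.real_norm_sq_eq, EuclideanSpace.real_norm_sq_eq, ← Finset.sum_sub_distrib]
  calc m ≤ x 0 ^ 2 - (x + y) 0 ^ 2 := coord_drop 0
    _ ≤ ∑ i, (x i ^ 2 - (x + y) i ^ 2) :=
      Finset.single_le_sum (f := fun i => x i ^ 2 - (x + y) i ^ 2)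
        (fun i _ => hm.trans (coord_drop i)) (Finset.mem_univ 0)

theorem gaussianReal_ne_zero_of_isOpen {μ : ℝ} {v : ℝ≥0} (hv : v ≠ 0) {S : Set ℝ}
    (hS : IsOpen S) (hne : S.Nonempty) : gaussianReal μ v S ≠ 0 := fun h =>
  (hS.measure_pos volume hne).ne' (gaussianReal_absolutelyContinuous' μ hv h)

theorem le_exp_of_antitone_of_le_mul {f : ℝ → ℝ} (anti : Antitone f) (f_zero : f 0 ≤ 1)
    {c T : ℝ} (hc₀ : 0 ≤ c) (hc₁ : c ≤ 1) (hT : 0 < T)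
    (decay : ∀ t, 0 ≤ t → f (t + T) ≤ (1 - c) * f t) {t : ℝ} (ht : 0 ≤ t) :
    f t ≤ Real.exp c * Real.exp (-(c / T * t)) := by
  have geometric (n : ℕ) : f (n * T) ≤ (1 - c) ^ n := by
    induction n with
    | zero => simpa using f_zero
    | succ n ih =>
      calc f ((n + 1 : ℕ) * T) = f (n * T + T) := by
            push_cast
            ring_nf
        _ ≤ (1 - c) * f (n * T) := decay _ (by positivity)
        _ ≤ (1 - c) * (1 - c) ^ n := mul_le_mul_of_nonneg_left ih (sub_nonneg.2 hc₁)
        _ = (1 - c) ^ (n + 1) := (pow_succ' _ _).symm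
  have floor_mul_le : ⌊t / T⌋₊ * T ≤ t := (le_div_iff₀ hT).1 (Nat.floor_le (by positivity))
  have le_floor : t / T - 1 ≤ ⌊t / T⌋₊ := (Nat.sub_one_lt_floor _).le
  calc f t ≤ f (⌊t / T⌋₊ * T) := anti floor_mul_le
    _ ≤ (1 - c) ^ ⌊t / T⌋₊ := geometric _
    _ ≤ Real.exp (-c) ^ ⌊t / T⌋₊ :=
      pow_le_pow_left₀ (sub_nonneg.2 hc₁) (Real.one_sub_le_exp_neg c) _
    _ = Real.exp (⌊t / T⌋₊ * -c) := (Real.exp_nat_mul _ _).symm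
    _ ≤ Real.exp (c + -(c / T * t)) := Real.exp_le_exp.2 (by
      rw [div_mul_eq_mul_div, mul_div_assoc]
      nlinarith)
    _ = _ := Real.exp_add _ _

namespace IsStdBMVec

variable {Ω : Type*} [MeasurableSpace Ω] {P : Measure Ω} {d : ℕ}
  {γ : ℝ → Ω → EuclideanSpace ℝ (Fin d)} {s t lam : ℝ}

theorem measure_increment_mem_signedBox (hγ : IsStdBMVec d P γ) (hs : 0 ≤ s) (hst : s ≤ t)
    {S : Set ℝ} (hS : MeasurableSet S) (x : EuclideanSpace ℝ (Fin d)) :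
    P {ω | (x, γ t ω - γ s ω) ∈ signedBox S} = gaussianReal 0 (t - s).toNNReal S ^ d := by
  let side (i : Fin d) : Set ℝ := {z | (if 0 ≤ x i then z else -z) ∈ S}
  have side_meas (i : Fin d) : MeasurableSet (side i) := by
    have : Measurable fun z : ℝ => if 0 ≤ x i then z else -z :=
      .ite (.const _) measurable_id measurable_neg
    exact this hS
  have side_measure (i : Fin d) :
      P ((fun ω => (γ t ω - γ s ω) i) ⁻¹' side i) = gaussianReal 0 (t - s).toNNReal S := by
    rw [← Measure.map_apply (hγ.measurable_increment_coord s t i) (side_meas i),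
      hγ.map_increment_coord hs hst]
    by_cases hx : 0 ≤ x i
    · simp only [side, hx, if_true, ofPred_mem_eq]
    · simp only [side, hx, if_false]
      conv_rhs => rw [← neg_zero, ← gaussianReal_map_neg, Measure.map_apply measurable_neg hS]
      rfl
  have := (hγ.iIndepFun_increment_coord s t).measure_inter_preimage_eq_mul Finset.univ
    fun i _ => side_meas i
  simp only [side_measure, Finset.prod_const, Finset.card_univ, Fintype.card_fin] at this
  rw [← this]
  congr 1
  ext ω
  simp [signedBox, side]

variable [IsProbabilityMeasure P]

theorem measure_inter_signedBox (hγ : IsStdBMVec d P γ) (hs : 0 ≤ s) (hst : s ≤ t) {E : Set Ω}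
    (hE : MeasurableSet[past γ s] E) {S : Set ℝ} (hS : MeasurableSet S) :
    P (E ∩ {ω | (γ s ω, γ t ω - γ s ω) ∈ signedBox S}) =
      gaussianReal 0 (t - s).toNNReal S ^ d * P E := by
  have present : Measurable[past γ s] (γ s) := measurable_past hs le_rfl
  have live : Measurable[past γ s] fun ω => ω ∈ E := (@measurable_mem _ E (past γ s)).2 hE
  have pair : Measurable[past γ s] fun ω => (ω ∈ E, γ s ω) := live.prodMk present
  exact measure_inter_setOf_mem_of_indepFun (past_le hγ.measurable s _ hE) (hγ.measurable s)
    (hγ.measurable_increment s t) (hγ.indepFun_increment hs hst pair)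
    (measurableSet_signedBox hS) (hγ.measure_increment_mem_signedBox hs hst hS)

/-- During two units of time, the process may first be pushed away from `0` in each coordinate and
then back, which costs at least `lam` of its squared norm. -/
theorem mul_measure_noDrawdownEvent_le [NeZero d] (hγ : IsStdBMVec d P γ) (ht : 0 ≤ t) :
    (gaussianReal 0 1 (Ioo (-1) (-(1 / 2))) ^ d * gaussianReal 0 1 (Ioi (|lam| + 1)) ^ d) *
        P (noDrawdownEvent lam γ t) ≤
      P (noDrawdownEvent lam γ t \ noDrawdownEvent lam γ (t + 2)) := by
  let pushed : Set Ω := noDrawdownEvent lam γ t ∩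
    {ω | (γ t ω, γ (t + 1) ω - γ t ω) ∈ signedBox (Ioi (|lam| + 1))}
  have pushed_meas : MeasurableSet[past γ (t + 1)] pushed := by
    have present : Measurable[past γ (t + 1)] (γ t) := measurable_past ht (by linarith)
    have increment : Measurable[past γ (t + 1)] fun ω => γ (t + 1) ω - γ t ω :=
      measurable_past_increment ht (by linarith) le_rfl
    have pair : Measurable[past γ (t + 1)] fun ω => (γ t ω, γ (t + 1) ω - γ t ω) :=
      present.prodMk increment
    exact (past_mono (by linarith) _ hγ.measurableSet_past_noDrawdownEvent).inter
      (pair (measurableSet_signedBox measurableSet_Ioi))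
  have push := hγ.measure_inter_signedBox (t := t + 1) ht (by linarith)
    (hγ.measurableSet_past_noDrawdownEvent (lam := lam)) (measurableSet_Ioi (a := |lam| + 1))
  have pull := hγ.measure_inter_signedBox (t := t + 2) (by linarith) (by linarith) pushed_meas
    (measurableSet_Ioo (a := -1) (b := -(1 / 2)))
  rw [show (t + 1 - t : ℝ) = 1 by ring, Real.toNNReal_one] at push
  rw [show (t + 2 - (t + 1) : ℝ) = 1 by ring, Real.toNNReal_one] at pull
  rw [mul_assoc, ← push, ← pull]
  refine measure_mono ?_
  rintro ω ⟨⟨alive, far⟩, back⟩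
  refine ⟨alive, fun survives => ?_⟩
  have no_drop := survives (t + 1) (t + 2) (by linarith) (by linarith) le_rfl
  have drop := le_norm_sq_sub_norm_add_sq (abs_nonneg lam)
    (fun i => by simpa using norm_add_of_mem_signedBox_Ioi far i) back
  rw [add_sub_cancel] at drop
  exact (no_drop.trans_le (le_abs_self lam)).not_ge drop

theorem exists_measureReal_noDrawdownEvent_le [NeZero d] (hγ : IsStdBMVec d P γ) (lam : ℝ) :
    ∃ C ≥ 0, ∃ r > 0, ∀ t, 0 ≤ t →
      P.real (noDrawdownEvent lam γ t) ≤ C * Real.exp (-(r * t)) := by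
  let pull : ℝ := (gaussianReal 0 1).real (Ioo (-1) (-(1 / 2)))
  let push : ℝ := (gaussianReal 0 1).real (Ioi (|lam| + 1))
  have pull_pos : 0 < pull := ENNReal.toReal_pos (gaussianReal_ne_zero_of_isOpen one_ne_zero
    isOpen_Ioo (nonempty_Ioo.2 (by norm_num))) (measure_ne_top _ _)
  have push_pos : 0 < push := ENNReal.toReal_pos (gaussianReal_ne_zero_of_isOpen one_ne_zero
    isOpen_Ioi nonempty_Ioi) (measure_ne_top _ _)
  have rate_le_one : pull ^ d * push ^ d ≤ 1 :=
    mul_le_one₀ (pow_le_one₀ pull_pos.le measureReal_le_one) (by positivity)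
      (pow_le_one₀ push_pos.le measureReal_le_one)
  refine ⟨_, (Real.exp_pos (pull ^ d * push ^ d)).le, pull ^ d * push ^ d / 2, by positivity,
    fun t ht => ?_⟩
  refine le_exp_of_antitone_of_le_mul (f := fun t => P.real (noDrawdownEvent lam γ t))
    (fun s t hst => measureReal_mono (antitone_noDrawdownEvent hst)) measureReal_le_one
    (by positivity) rate_le_one two_pos (fun t ht => ?_) ht
  have := ENNReal.toReal_mono (measure_ne_top _ _)
    (hγ.mul_measure_noDrawdownEvent_le (lam := lam) ht)
  rw [ENNReal.toReal_mul, ENNReal.toReal_mul, ENNReal.toReal_pow, ENNReal.toReal_pow] at this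
  have diff := measureReal_sdiff (μ := P) (antitone_noDrawdownEvent (lam := lam) (γ := γ)
    (by linarith : t ≤ t + 2)) hγ.measurableSet_noDrawdownEvent
  change pull ^ d * push ^ d * P.real (noDrawdownEvent lam γ t) ≤
    P.real (noDrawdownEvent lam γ t \ noDrawdownEvent lam γ (t + 2)) at this
  linarith

theorem ae_exists_not_noDrawdown [NeZero d] (hγ : IsStdBMVec d P γ) (lam : ℝ) :
    ∀ᵐ ω ∂P, ∃ t, ¬NoDrawdown lam (fun s => sqBessel γ s ω) t := by
  obtain ⟨C, -, r, hr, decay⟩ := hγ.exists_measureReal_noDrawdownEvent_le lam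
  rw [ae_iff, ← measureReal_eq_zero_iff]
  push Not
  refine le_antisymm ?_ measureReal_nonneg
  have lim : Tendsto (fun t => C * Real.exp (-(r * t))) atTop (𝓝 0) := by
    simpa using (Real.tendsto_exp_neg_atTop_nhds_zero.comp
      (tendsto_id.const_mul_atTop hr)).const_mul C
  refine ge_of_tendsto lim ?_
  filter_upwards [eventually_ge_atTop 0] with t ht
  have subset : {ω | ∀ t, NoDrawdown lam (fun s => sqBessel γ s ω) t} ⊆ noDrawdownEvent lam γ t :=
    fun ω hω => hω t
  exact (measureReal_mono subset).trans (decay t ht)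

end IsStdBMVec

/-! ### Wald's identity for the drawdown time -/

theorem sum_mul_exp_neg_uniformGrid_le {h r : ℝ} (hh : 0 < h) (hr : 0 < r) (J : ℕ) :
    ∑ j ∈ Finset.range J, h * Real.exp (-(r * uniformGrid h j)) ≤ h + 1 / r := by
  let tail (j : ℕ) : ℝ := (h + 1 / r) * Real.exp (-(r * uniformGrid h j))
  have step (j : ℕ) : h * Real.exp (-(r * uniformGrid h j)) ≤ tail j - tail (j + 1) := by
    have succ : Real.exp (-(r * uniformGrid h (j + 1))) =
        Real.exp (-(r * uniformGrid h j)) * Real.exp (-(r * h)) := by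
      rw [← Real.exp_add, uniformGrid, uniformGrid, Nat.cast_succ]
      ring_nf
    have ratio : (h + 1 / r) * Real.exp (-(r * h)) ≤ 1 / r := by
      rw [Real.exp_neg, ← div_eq_mul_inv, div_le_iff₀ (Real.exp_pos _),
        show h + 1 / r = 1 / r * (r * h + 1) by field_simp]
      gcongr
      exact Real.add_one_le_exp _
    simp only [tail, succ]
    nlinarith [Real.exp_pos (-(r * uniformGrid h j))]
  calc ∑ j ∈ Finset.range J, h * Real.exp (-(r * uniformGrid h j))
      ≤ tail 0 - tail J := (Finset.sum_le_sum fun j _ => step j).trans_eq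
        (Finset.sum_range_sub' tail J)
    _ ≤ tail 0 := sub_le_self _ (by positivity)
    _ = h + 1 / r := by simp [tail, uniformGrid]

section UniformIntegrability

variable {Ω : Type*} [MeasurableSpace Ω] {P : Measure Ω} [IsFiniteMeasure P]

theorem uniformIntegrable_of_integral_sq_le {ι : Type*} {f : ι → Ω → ℝ} {C : ℝ} (hC : 0 ≤ C)
    (hf : ∀ i, MemLp (f i) 2 P) (bound : ∀ i, ∫ ω, f i ω ^ 2 ∂P ≤ C) :
    UniformIntegrable f 1 P := by
  refine uniformIntegrable_of le_rfl (by simp) (fun i => (hf i).1) fun ε hε => ?_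
  have level_pos : 0 < C / ε + 1 := by positivity
  refine ⟨⟨C / ε + 1, level_pos.le⟩, fun i => ?_⟩
  rw [eLpNorm_one_eq_lintegral_enorm]
  have sq_int := (hf i).integrable_sq
  calc ∫⁻ ω, ‖({x | C / ε + 1 ≤ ‖f i x‖}.indicator (f i)) ω‖ₑ ∂P
      ≤ ∫⁻ ω, ENNReal.ofReal (f i ω ^ 2 / (C / ε + 1)) ∂P := by
        refine lintegral_mono fun ω => ?_
        rw [indicator_apply]
        split_ifs with large
        · change C / ε + 1 ≤ ‖f i ω‖ at large
          rw [← ofReal_norm]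
          refine ENNReal.ofReal_le_ofReal ((le_div_iff₀ level_pos).2 ?_)
          rw [← sq_abs, ← Real.norm_eq_abs, pow_two]
          gcongr
        · simp
    _ = ENNReal.ofReal ((∫ ω, f i ω ^ 2 ∂P) / (C / ε + 1)) := by
        rw [← ofReal_integral_eq_lintegral_ofReal (sq_int.div_const _)
          (ae_of_all _ fun ω => by positivity), integral_div]
    _ ≤ ENNReal.ofReal ε := by
        refine ENNReal.ofReal_le_ofReal ((div_le_iff₀ level_pos).2 ((bound i).trans ?_))
        rw [mul_add, mul_div_cancel₀ _ hε.ne']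
        linarith

theorem integrable_and_tendsto_integral_of_integral_sq_le {f : ℕ → Ω → ℝ} {g : Ω → ℝ} {C : ℝ}
    (hC : 0 ≤ C) (hf : ∀ k, MemLp (f k) 2 P) (bound : ∀ k, ∫ ω, f k ω ^ 2 ∂P ≤ C)
    (lim : ∀ᵐ ω ∂P, Tendsto (fun k => f k ω) atTop (𝓝 (g ω))) :
    Integrable g P ∧ Tendsto (fun k => ∫ ω, f k ω ∂P) atTop (𝓝 (∫ ω, g ω ∂P)) := by
  have unif := uniformIntegrable_of_integral_sq_le hC hf bound
  have hg := unif.integrable_of_ae_tendsto lim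
  refine ⟨hg, tendsto_integral_of_L1' g hg.1
    (.of_forall fun k => (hf k).integrable one_le_two) ?_⟩
  exact tendsto_Lp_finite_of_tendsto_ae le_rfl (by simp) (fun k => (hf k).1)
    (memLp_one_iff_integrable.2 hg) unif.2.1 lim

end UniformIntegrability

/-- The indicator of the event that no drawdown of size `lam` occurs up to time `t`. -/
noncomputable def survival {Ω : Type*} {d : ℕ} (lam : ℝ)
    (γ : ℝ → Ω → EuclideanSpace ℝ (Fin d)) (t : ℝ) : Ω → ℝ :=
  (noDrawdownEvent lam γ t).indicator 1

open Classical in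
/-- The first point of the grid `0, h, …, J * h` at which a drawdown of size `lam` has occurred,
or the last point of the grid if there is none: a discrete approximation of `ddTime`. -/
noncomputable def drawdownGridTime {Ω : Type*} {d : ℕ} (lam : ℝ)
    (γ : ℝ → Ω → EuclideanSpace ℝ (Fin d)) (h : ℝ) (J : ℕ) (ω : Ω) : ℝ :=
  uniformGrid h (Nat.count (fun j => ω ∈ noDrawdownEvent lam γ (uniformGrid h j)) J)

section Survival

variable {Ω : Type*} {d : ℕ} {lam : ℝ} {γ : ℝ → Ω → EuclideanSpace ℝ (Fin d)} {h t : ℝ} {J : ℕ}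
  {ω : Ω}

theorem survival_nonneg (ω : Ω) : 0 ≤ survival lam γ t ω :=
  indicator_nonneg (fun _ _ => zero_le_one) ω

theorem survival_sq (ω : Ω) : survival lam γ t ω ^ 2 = survival lam γ t ω := by
  by_cases alive : ω ∈ noDrawdownEvent lam γ t <;> simp [survival, alive]

theorem antitone_mem_noDrawdownEvent_uniformGrid (hh : 0 ≤ h) :
    Antitone fun j => ω ∈ noDrawdownEvent lam γ (uniformGrid h j) :=
  fun _ _ hij hω => antitone_noDrawdownEvent (monotone_uniformGrid hh hij) hω

theorem sum_survival_mul_sub (hh : 0 ≤ h) (f : ℝ → ℝ) (J : ℕ) (ω : Ω) :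
    ∑ j ∈ Finset.range J, survival lam γ (uniformGrid h j) ω *
        (f (uniformGrid h (j + 1)) - f (uniformGrid h j)) =
      f (drawdownGridTime lam γ h J ω) - f 0 := by
  classical
  have telescope := sum_ite_sub_of_antitone (antitone_mem_noDrawdownEvent_uniformGrid
    (lam := lam) (γ := γ) (ω := ω) hh) (fun j => f (uniformGrid h j)) J
  have start : uniformGrid h 0 = 0 := by simp [uniformGrid]
  rw [start] at telescope
  convert telescope using 1
  · refine Finset.sum_congr rfl fun j _ => ?_
    rw [survival, indicator_apply, Pi.one_apply, ite_mul, one_mul, zero_mul]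
  · rw [drawdownGridTime]

theorem min_ddTime_le_drawdownGridTime (hcont : Continuous fun s => sqBessel γ s ω)
    (hh : 0 ≤ h) : min (J * h) (ddTime lam (sqBessel γ) ω) ≤ drawdownGridTime lam γ h J ω := by
  classical
  rw [drawdownGridTime]
  set n := Nat.count (fun j => ω ∈ noDrawdownEvent lam γ (uniformGrid h j)) J
  rcases (Nat.count_le _ : n ≤ J).eq_or_lt with all | stopped
  · exact (min_le_left _ _).trans_eq (by rw [show n = J from all, uniformGrid])
  · refine (min_le_right _ _).trans (not_lt.1 fun early => ?_)
    exact lt_irrefl n ((lt_count_iff_of_antitone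
      (antitone_mem_noDrawdownEvent_uniformGrid hh) stopped).2
      (noDrawdown_of_lt_ddTime hcont early))

theorem drawdownGridTime_le (hcont : Continuous fun s => sqBessel γ s ω) (hh : 0 ≤ h)
    (drop : ∃ t, ¬NoDrawdown lam (fun s => sqBessel γ s ω) t) :
    drawdownGridTime lam γ h J ω ≤ ddTime lam (sqBessel γ) ω + h := by
  classical
  rw [drawdownGridTime]
  set n := Nat.count (fun j => ω ∈ noDrawdownEvent lam γ (uniformGrid h j)) J
  obtain ⟨T, hT⟩ := drop
  rcases Nat.eq_zero_or_eq_succ_pred n with zero | succ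
  · rw [zero, uniformGrid, Nat.cast_zero, zero_mul]
    exact add_nonneg ddTime_nonneg hh
  · have alive := (lt_count_iff_of_antitone (antitone_mem_noDrawdownEvent_uniformGrid hh)
      (show n.pred < J from (by omega : n.pred < n).trans_le (Nat.count_le _))).1
        (by omega : n.pred < n)
    have := le_ddTime_of_noDrawdown hcont alive hT
    rw [succ]
    linarith [uniformGrid_succ_sub h n.pred]

theorem tendsto_drawdownGridTime (hcont : Continuous fun s => sqBessel γ s ω)
    (drop : ∃ t, ¬NoDrawdown lam (fun s => sqBessel γ s ω) t) :
    Tendsto (fun k => drawdownGridTime lam γ (meshSize k) (meshCount k) ω) atTop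
      (𝓝 (ddTime lam (sqBessel γ) ω)) := by
  refine tendsto_of_tendsto_of_tendsto_of_le_of_le' tendsto_const_nhds
    (h := fun k => ddTime lam (sqBessel γ) ω + meshSize k) ?_ ?_
    (.of_forall fun k => drawdownGridTime_le hcont (meshSize_pos k).le drop)
  · simpa only [add_zero] using tendsto_meshSize.const_add (ddTime lam (sqBessel γ) ω)
  · filter_upwards [tendsto_meshCount_mul_meshSize.eventually_ge_atTop
      (ddTime lam (sqBessel γ) ω)] with k hk
    exact (min_eq_right hk).symm.trans_le
      (min_ddTime_le_drawdownGridTime hcont (meshSize_pos k).le)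

end Survival

namespace IsStdBMVec

variable {Ω : Type*} [MeasurableSpace Ω] {P : Measure Ω} {d : ℕ}
  {γ : ℝ → Ω → EuclideanSpace ℝ (Fin d)} {h t lam : ℝ}

theorem measurable_past_survival (hγ : IsStdBMVec d P γ) :
    Measurable[past γ t] (survival lam γ t) :=
  (measurable_const (a := (1 : ℝ))).indicator hγ.measurableSet_past_noDrawdownEvent

variable [IsProbabilityMeasure P]

theorem hasAllMoments_survival (hγ : IsStdBMVec d P γ) : HasAllMoments P (survival lam γ t) := by
  refine .of_bound (hγ.measurable_of_past hγ.measurable_past_survival) (C := 1) fun ω => ?_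
  rw [abs_of_nonneg (survival_nonneg ω)]
  exact indicator_le_self' (fun _ _ => zero_le_one) ω

theorem integral_survival_mul_le (hγ : IsStdBMVec d P γ) {f : Ω → ℝ} (hf : HasAllMoments P f)
    {x : ℝ} (hx : 0 < x) :
    ∫ ω, survival lam γ t ω * f ω ∂P ≤
      (x⁻¹ * P.real (noDrawdownEvent lam γ t) + x * ∫ ω, f ω ^ 2 ∂P) / 2 := by
  have S_mom := hγ.hasAllMoments_survival (lam := lam) (t := t)
  have mean : ∫ ω, survival lam γ t ω ∂P = P.real (noDrawdownEvent lam γ t) :=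
    integral_indicator_one hγ.measurableSet_noDrawdownEvent
  have am_gm (ω : Ω) : survival lam γ t ω * f ω ≤
      (x⁻¹ * survival lam γ t ω + x * f ω ^ 2) / 2 := by
    have := mul_nonneg (inv_nonneg.2 hx.le) (sq_nonneg (survival lam γ t ω - x * f ω))
    have expand : x⁻¹ * (survival lam γ t ω - x * f ω) ^ 2 =
        x⁻¹ * survival lam γ t ω ^ 2 + x * f ω ^ 2 - 2 * (survival lam γ t ω * f ω) := by
      field_simp
      ring
    rw [expand, survival_sq] at this
    linarith
  have int₁ := (S_mom.const_mul x⁻¹).integrable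
  have int₂ := (hf.sq.const_mul x).integrable
  refine (integral_mono (S_mom.mul hf).integrable ((int₁.add int₂).div_const 2) am_gm).trans_eq ?_
  rw [integral_div, ← mean, ← integral_const_mul, ← integral_const_mul, ← integral_add int₁ int₂]
  rfl

theorem exists_integral_survival_mul_le [NeZero d] (hγ : IsStdBMVec d P γ) (lam : ℝ) {K : ℝ}
    (hK : 0 ≤ K) : ∃ C ≥ 0, ∃ r > 0, ∀ t, 0 ≤ t → ∀ f : Ω → ℝ, HasAllMoments P f →
      ∫ ω, f ω ^ 2 ∂P ≤ K * (1 + t) ^ 2 →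
      ∫ ω, survival lam γ t ω * f ω ∂P ≤ C * Real.exp (-(r * t)) := by
  obtain ⟨C, hC, r, hr, decay⟩ := hγ.exists_measureReal_noDrawdownEvent_le lam
  have poly {t : ℝ} (ht : 0 ≤ t) :
      (1 + t) ^ 2 ≤ (2 + 2 * (2 / (r / 4) ^ 2)) * Real.exp (r / 4 * t) := by
    have quadratic := Real.quadratic_le_exp_of_nonneg (x := r / 4 * t) (by positivity)
    have one_le : 1 ≤ Real.exp (r / 4 * t) := Real.one_le_exp (by positivity)
    have sq_le : t ^ 2 ≤ 2 / (r / 4) ^ 2 * Real.exp (r / 4 * t) := by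
      rw [div_mul_eq_mul_div, le_div_iff₀ (by positivity)]
      nlinarith [mul_nonneg (div_nonneg hr.le zero_le_four) ht]
    nlinarith [sq_nonneg (1 - t)]
  refine ⟨(C + K * (2 + 2 * (2 / (r / 4) ^ 2))) / 2, by positivity, r / 4, by positivity,
    fun t ht f hf f_sq => ?_⟩
  have exp_mul (a b : ℝ) : Real.exp (a * t) * Real.exp (b * t) = Real.exp ((a + b) * t) := by
    rw [← Real.exp_add, add_mul]
  calc ∫ ω, survival lam γ t ω * f ω ∂P
      ≤ ((Real.exp (-(r / 2) * t))⁻¹ * P.real (noDrawdownEvent lam γ t) +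
          Real.exp (-(r / 2) * t) * ∫ ω, f ω ^ 2 ∂P) / 2 :=
        hγ.integral_survival_mul_le hf (Real.exp_pos _)
    _ ≤ (Real.exp (r / 2 * t) * (C * Real.exp (-r * t)) + Real.exp (-(r / 2) * t) *
          (K * ((2 + 2 * (2 / (r / 4) ^ 2)) * Real.exp (r / 4 * t)))) / 2 := by
        rw [← Real.exp_neg, neg_mul, neg_neg, neg_mul]
        gcongr
        · exact decay t ht
        · exact f_sq.trans (mul_le_mul_of_nonneg_left (poly ht) hK)
    _ = (C * Real.exp (-(r / 2) * t) +
          K * (2 + 2 * (2 / (r / 4) ^ 2)) * Real.exp (-(r / 4) * t)) / 2 := by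
        rw [show -(r / 4) = -(r / 2) + r / 4 by ring, ← exp_mul,
          show -(r / 2) * t = (r / 2 + -r) * t by ring, ← exp_mul]
        ring
    _ ≤ (C * Real.exp (-(r / 4 * t)) +
          K * (2 + 2 * (2 / (r / 4) ^ 2)) * Real.exp (-(r / 4 * t))) / 2 := by
        gcongr
        · nlinarith
        · linarith
    _ = _ := by ring

end IsStdBMVec

namespace IsStdBMVec

variable {Ω : Type*} [MeasurableSpace Ω] {P : Measure Ω} {d : ℕ}
  {γ : ℝ → Ω → EuclideanSpace ℝ (Fin d)} {h lam : ℝ}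

theorem sum_survival_mul_comp_sqBessel_sub (hγ : IsStdBMVec d P γ) (hh : 0 ≤ h) {f : ℝ → ℝ}
    (hf : f 0 = 0) (J : ℕ) (ω : Ω) :
    ∑ j ∈ Finset.range J, survival lam γ (uniformGrid h j) ω *
        (f (sqBessel γ (uniformGrid h (j + 1)) ω) - f (sqBessel γ (uniformGrid h j) ω)) =
      f (sqBessel γ (drawdownGridTime lam γ h J ω) ω) := by
  rw [sum_survival_mul_sub hh fun t => f (sqBessel γ t ω), sqBessel, sqBessel, hγ.start, norm_zero,
    zero_pow two_ne_zero, hf, sub_zero]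

variable [IsProbabilityMeasure P]

theorem hasAllMoments_drawdownGridTime (hγ : IsStdBMVec d P γ) (hh : 0 ≤ h) (J : ℕ) :
    HasAllMoments P (drawdownGridTime lam γ h J) := by
  have telescope := sum_survival_mul_sub (lam := lam) (γ := γ) hh id J
  simp only [id, sub_zero] at telescope
  rw [← funext telescope]
  exact .sum _ fun _ _ => hγ.hasAllMoments_survival.mul (.const _)

theorem hasAllMoments_sqBessel_drawdownGridTime (hγ : IsStdBMVec d P γ) (hh : 0 ≤ h) (J : ℕ) :
    HasAllMoments P fun ω => sqBessel γ (drawdownGridTime lam γ h J ω) ω := by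
  have telescope := hγ.sum_survival_mul_comp_sqBessel_sub (lam := lam) hh (f := id) rfl J
  simp only [id] at telescope
  rw [← funext telescope]
  exact .sum _ fun j _ => hγ.hasAllMoments_survival.mul
    ((hγ.hasAllMoments_sqBessel (uniformGrid_nonneg hh _)).sub
      (hγ.hasAllMoments_sqBessel (uniformGrid_nonneg hh _)))

theorem integral_sqBessel_drawdownGridTime (hγ : IsStdBMVec d P γ) (hh : 0 ≤ h) (J : ℕ) :
    ∫ ω, sqBessel γ (drawdownGridTime lam γ h J ω) ω ∂P =
      d * ∫ ω, drawdownGridTime lam γ h J ω ∂P := by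
  have grid_nonneg (j : ℕ) : 0 ≤ uniformGrid h j := uniformGrid_nonneg hh j
  have S_mom (j : ℕ) := hγ.hasAllMoments_survival (lam := lam) (t := uniformGrid h j)
  have telescope_time := sum_survival_mul_sub (lam := lam) (γ := γ) hh id J
  have telescope_value := hγ.sum_survival_mul_comp_sqBessel_sub (lam := lam) hh (f := id) rfl J
  simp only [id, sub_zero] at telescope_time telescope_value
  simp_rw [← telescope_value, ← telescope_time]
  rw [integral_finsetSum _ fun j _ => ((S_mom j).mul (.const _)).integrable,
    integral_finsetSum _ fun j _ => ((S_mom j).mul ((hγ.hasAllMoments_sqBessel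
      (grid_nonneg _)).sub (hγ.hasAllMoments_sqBessel (grid_nonneg _)))).integrable,
    Finset.mul_sum]
  refine Finset.sum_congr rfl fun j _ => ?_
  rw [hγ.integral_mul_sqBessel_sub (grid_nonneg j) (monotone_uniformGrid hh j.le_succ)
    hγ.measurable_past_survival (S_mom j), integral_mul_const]
  ring

theorem integral_drawdownGridTime_sq_le (hγ : IsStdBMVec d P γ) (hh : 0 ≤ h) (hh₁ : h ≤ 1)
    (J : ℕ) : ∫ ω, drawdownGridTime lam γ h J ω ^ 2 ∂P ≤
      ∑ j ∈ Finset.range J,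
        2 * h * ∫ ω, survival lam γ (uniformGrid h j) ω * (1 + uniformGrid h j) ∂P := by
  have S_mom (j : ℕ) := hγ.hasAllMoments_survival (lam := lam) (t := uniformGrid h j)
  have telescope := sum_survival_mul_sub (lam := lam) (γ := γ) hh (fun t => t ^ 2) J
  simp only [zero_pow two_ne_zero, sub_zero] at telescope
  simp_rw [← telescope]
  rw [integral_finsetSum _ fun j _ => ((S_mom j).mul (.const _)).integrable]
  refine Finset.sum_le_sum fun j _ => ?_
  rw [← integral_const_mul]
  refine integral_mono ((S_mom j).mul (.const _)).integrable
    (((S_mom j).mul (.const _)).const_mul _).integrable fun ω => ?_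
  simp only [mul_left_comm _ (survival lam γ _ ω)]
  refine mul_le_mul_of_nonneg_left ?_ (survival_nonneg ω)
  rw [← sub_add_cancel (uniformGrid h (j + 1)) (uniformGrid h j), uniformGrid_succ_sub]
  nlinarith

theorem integral_sqBessel_drawdownGridTime_sq_le (hγ : IsStdBMVec d P γ) (hh : 0 ≤ h) (J : ℕ) :
    ∫ ω, sqBessel γ (drawdownGridTime lam γ h J ω) ω ^ 2 ∂P ≤
      ∑ j ∈ Finset.range J,
        (10 * d * h * ∫ ω, survival lam γ (uniformGrid h j) ω * sqBessel γ (uniformGrid h j) ω ∂P +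
          2 * (d ^ 2 * gaussianFourthMoment) * h ^ 2 *
            ∫ ω, survival lam γ (uniformGrid h j) ω ∂P) := by
  have grid_nonneg (j : ℕ) : 0 ≤ uniformGrid h j := uniformGrid_nonneg hh j
  have S_mom (j : ℕ) := hγ.hasAllMoments_survival (lam := lam) (t := uniformGrid h j)
  simp_rw [← hγ.sum_survival_mul_comp_sqBessel_sub (lam := lam) hh (f := fun x => x ^ 2)
    (zero_pow two_ne_zero) J]
  rw [integral_finsetSum _ fun j _ => ((S_mom j).mul ((hγ.hasAllMoments_sqBessel
    (grid_nonneg _)).sq.sub (hγ.hasAllMoments_sqBessel (grid_nonneg _)).sq)).integrable]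
  refine Finset.sum_le_sum fun j _ => ?_
  have bound := hγ.integral_mul_sqBessel_sq_sub_le (grid_nonneg j)
    (monotone_uniformGrid hh j.le_succ) (hγ.measurable_past_survival (lam := lam)) (S_mom j)
    survival_nonneg
  rwa [uniformGrid_succ_sub] at bound

theorem exists_integral_drawdownGridTime_sq_le [NeZero d] (hγ : IsStdBMVec d P γ) (lam : ℝ) :
    ∃ D ≥ 0, ∀ h, 0 < h → h ≤ 1 → ∀ J, ∫ ω, drawdownGridTime lam γ h J ω ^ 2 ∂P ≤ D := by
  obtain ⟨C, hC, r, hr, decay⟩ := hγ.exists_integral_survival_mul_le lam zero_le_one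
  refine ⟨2 * C * (1 + 1 / r), by positivity, fun h hh hh₁ J => ?_⟩
  have term (j : ℕ) : ∫ ω, survival lam γ (uniformGrid h j) ω * (1 + uniformGrid h j) ∂P ≤
      C * Real.exp (-(r * uniformGrid h j)) :=
    decay _ (uniformGrid_nonneg hh.le j) (fun _ => 1 + uniformGrid h j) (.const _) (by simp)
  calc ∫ ω, drawdownGridTime lam γ h J ω ^ 2 ∂P
      ≤ ∑ j ∈ Finset.range J, 2 * h * (C * Real.exp (-(r * uniformGrid h j))) :=
        (hγ.integral_drawdownGridTime_sq_le hh.le hh₁ J).trans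
          (Finset.sum_le_sum fun j _ => mul_le_mul_of_nonneg_left (term j) (by positivity))
    _ = 2 * C * ∑ j ∈ Finset.range J, h * Real.exp (-(r * uniformGrid h j)) := by
        rw [Finset.mul_sum]
        exact Finset.sum_congr rfl fun j _ => by ring
    _ ≤ 2 * C * (1 + 1 / r) := by
        gcongr
        exact (sum_mul_exp_neg_uniformGrid_le hh hr J).trans (by gcongr)

theorem exists_integral_sqBessel_drawdownGridTime_sq_le [NeZero d] (hγ : IsStdBMVec d P γ)
    (lam : ℝ) : ∃ D ≥ 0, ∀ h, 0 < h → h ≤ 1 → ∀ J,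
      ∫ ω, sqBessel γ (drawdownGridTime lam γ h J ω) ω ^ 2 ∂P ≤ D := by
  let κ : ℝ := d ^ 2 * gaussianFourthMoment
  have κ_nonneg : 0 ≤ κ := mul_nonneg (sq_nonneg _) gaussianFourthMoment_nonneg
  obtain ⟨C, hC, r, hr, decay⟩ :=
    hγ.exists_integral_survival_mul_le lam (add_nonneg zero_le_one κ_nonneg)
  refine ⟨(10 * d + 2 * κ) * C * (1 + 1 / r), by positivity, fun h hh hh₁ J => ?_⟩
  have term_value (j : ℕ) :
      ∫ ω, survival lam γ (uniformGrid h j) ω * sqBessel γ (uniformGrid h j) ω ∂P ≤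
        C * Real.exp (-(r * uniformGrid h j)) := by
    have grid_nonneg := uniformGrid_nonneg hh.le j
    refine decay _ grid_nonneg _ (hγ.hasAllMoments_sqBessel grid_nonneg)
      ((hγ.integral_sqBessel_sq_le grid_nonneg).trans ?_)
    gcongr <;> linarith
  have term_mass (j : ℕ) : ∫ ω, survival lam γ (uniformGrid h j) ω ∂P ≤
      C * Real.exp (-(r * uniformGrid h j)) := by
    have grid_nonneg := uniformGrid_nonneg hh.le j
    have := decay _ grid_nonneg (fun _ => 1) (.const _) (by
      simpa using one_le_mul_of_one_le_of_one_le (by linarith : 1 ≤ 1 + κ)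
        (one_le_pow₀ (by linarith : 1 ≤ 1 + uniformGrid h j)))
    simpa only [mul_one] using this
  calc ∫ ω, sqBessel γ (drawdownGridTime lam γ h J ω) ω ^ 2 ∂P
      ≤ ∑ j ∈ Finset.range J, (10 * d * h * (C * Real.exp (-(r * uniformGrid h j))) +
          2 * κ * h * (C * Real.exp (-(r * uniformGrid h j)))) := by
        refine (hγ.integral_sqBessel_drawdownGridTime_sq_le hh.le J).trans
          (Finset.sum_le_sum fun j _ => ?_)
        gcongr
        · exact term_value j
        · exact integral_nonneg survival_nonneg
        · exact pow_le_of_le_one hh.le hh₁ two_ne_zero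
        · exact term_mass j
    _ = (10 * d + 2 * κ) * C * ∑ j ∈ Finset.range J, h * Real.exp (-(r * uniformGrid h j)) := by
        rw [Finset.mul_sum]
        exact Finset.sum_congr rfl fun j _ => by ring
    _ ≤ (10 * d + 2 * κ) * C * (1 + 1 / r) := by
        gcongr
        exact (sum_mul_exp_neg_uniformGrid_le hh hr J).trans (by gcongr)

theorem wald_ddTime [NeZero d] (hγ : IsStdBMVec d P γ) (lam : ℝ) :
    Integrable (ddTime lam (sqBessel γ)) P ∧
      Integrable (fun ω => sqBessel γ (ddTime lam (sqBessel γ) ω) ω) P ∧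
      ∫ ω, sqBessel γ (ddTime lam (sqBessel γ) ω) ω ∂P =
        d * ∫ ω, ddTime lam (sqBessel γ) ω ∂P := by
  obtain ⟨D₁, hD₁, time_sq⟩ := hγ.exists_integral_drawdownGridTime_sq_le lam
  obtain ⟨D₂, hD₂, value_sq⟩ := hγ.exists_integral_sqBessel_drawdownGridTime_sq_le lam
  have mesh_nonneg (k : ℕ) : 0 ≤ meshSize k := (meshSize_pos k).le
  have lim : ∀ᵐ ω ∂P, Tendsto (fun k => drawdownGridTime lam γ (meshSize k) (meshCount k) ω)
      atTop (𝓝 (ddTime lam (sqBessel γ) ω)) :=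
    (hγ.ae_exists_not_noDrawdown lam).mono fun ω => tendsto_drawdownGridTime
      (hγ.continuous_sqBessel ω)
  obtain ⟨time_int, time_lim⟩ := integrable_and_tendsto_integral_of_integral_sq_le hD₁
    (fun k => hγ.hasAllMoments_drawdownGridTime (mesh_nonneg k) (meshCount k) 2)
    (fun k => time_sq _ (meshSize_pos k) (meshSize_le_one k) _) lim
  obtain ⟨value_int, value_lim⟩ := integrable_and_tendsto_integral_of_integral_sq_le hD₂
    (fun k => hγ.hasAllMoments_sqBessel_drawdownGridTime (mesh_nonneg k) (meshCount k) 2)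
    (fun k => value_sq _ (meshSize_pos k) (meshSize_le_one k) _)
    (lim.mono fun ω h => ((hγ.continuous_sqBessel ω).tendsto _).comp h)
  refine ⟨time_int, value_int, tendsto_nhds_unique value_lim ?_⟩
  simp_rw [hγ.integral_sqBessel_drawdownGridTime (mesh_nonneg _)]
  exact time_lim.const_mul _

end IsStdBMVec

theorem sqBessel4_dds_and_wald_general {Ω : Type*} [MeasurableSpace Ω] (P : Measure Ω)
    [IsProbabilityMeasure P] {d : ℕ} [NeZero d] (γ : ℝ → Ω → EuclideanSpace ℝ (Fin d))
    (hγ : IsStdBMVec d P γ) (lam : ℝ) :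
    (∃ B : ℝ → Ω → ℝ, IsStdBM P B ∧
      (∀ᵐ ω ∂P, ∀ t : ℝ, 0 ≤ t →
        sqBessel γ t ω = 2 * B (∫ s in (0 : ℝ)..t, sqBessel γ s ω) ω + d * t) ∧
      ∫ ω, B (∫ s in (0 : ℝ)..(ddTime lam (sqBessel γ) ω), sqBessel γ s ω) ω ∂P = 0) ∧
    ∫ ω, ddTime lam (sqBessel γ) ω ∂P =
      (1 / d) * ∫ ω, sqBessel γ (ddTime lam (sqBessel γ) ω) ω ∂P := by
  obtain ⟨time_int, value_int, wald⟩ := hγ.wald_ddTime lam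
  obtain ⟨G, hG, G_meas, rate⟩ := hγ.ae_isClockRate.exists_measurable_mem
  have dds : ∀ᵐ ω ∂P, ∀ t : ℝ, 0 ≤ t →
      ddsMotion γ G (∫ s in (0 : ℝ)..t, sqBessel γ s ω) ω = (sqBessel γ t ω - d * t) / 2 := by
    filter_upwards [hG] with ω hω t ht using ddsMotion_clock hω (rate ω hω) ht
  refine ⟨⟨ddsMotion γ G, hγ.isStdBM_ddsMotion G_meas hG rate, ?_, ?_⟩, ?_⟩
  · filter_upwards [dds] with ω hω t ht
    rw [hω t ht]
    ring
  · rw [integral_congr_ae (dds.mono fun ω hω => hω _ ddTime_nonneg), integral_div,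
      integral_sub value_int (time_int.const_mul _), integral_const_mul, wald, sub_self, zero_div]
  · have : (d : ℝ) ≠ 0 := NeZero.ne _
    rw [wald]
    field_simp

/-- Dambis–Dubins–Schwarz representation and Wald identity: there is a
standard Brownian motion `B` with `U(t) = 2 B(A(t)) + 4t` (where `A(t) := ∫₀^t U(s) ds`),
`E[B(A(τ₁^U))] = 0`, and consequently `E[τ₁^U] = (1/4) E[U(τ₁^U)]`. -/
theorem sqBessel4_dds_and_wald
    {Ω : Type*} [MeasurableSpace Ω] (P : Measure Ω) [IsProbabilityMeasure P]
    (γ : ℝ → Ω → EuclideanSpace ℝ (Fin 4)) (hγ : IsStdBMVec 4 P γ) :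
    (∃ B : ℝ → Ω → ℝ, IsStdBM P B ∧
      (∀ᵐ ω ∂P, ∀ t : ℝ, 0 ≤ t →
        sqBessel4 γ t ω = 2 * B (∫ s in (0:ℝ)..t, sqBessel4 γ s ω) ω + 4 * t) ∧
      ∫ ω, B (∫ s in (0:ℝ)..(ddTime 1 (sqBessel4 γ) ω), sqBessel4 γ s ω) ω ∂P = 0) ∧
    ∫ ω, ddTime 1 (sqBessel4 γ) ω ∂P
      = (1 / 4) * ∫ ω, sqBessel4 γ (ddTime 1 (sqBessel4 γ) ω) ω ∂P := by
  exact_mod_cast sqBessel4_dds_and_wald_general P γ hγ 1
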